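/- A finite-dimensional complex representation ρ of SL_n(ℤ) (n ≥ 3) has depth dividing ℓ (i.e. its restriction to the congruence subgroup Γ_n(ℓ) is algebraic) if and only if ρ(E_{1,2}^ℓ) is a unipotent matrix. -/

import Mathlib

open Matrix

/-- The elementary matrix `E = E_{1,2}` (identity plus a `1` in position `(1,2)`)
as an element of `SL_{n+3}(R)`. -/
def Emat (n : ℕ) (R : Type*) [CommRing R] :
    Matrix.SpecialLinearGroup (Fin (n + 3)) R :=
  ⟨Matrix.transvection 0 1 1, by exact Matrix.det_transvection_of_ne 0 1 zero_ne_one 1⟩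

/-- A representation of `SL_n(ℂ)` is algebraic (rational) if each matrix entry of `ρ(g)`
is a polynomial function of the matrix entries of `g`. -/
def IsAlgebraicSL {n N : ℕ}
    (ρ : Matrix.SpecialLinearGroup (Fin n) ℂ →* GL (Fin N) ℂ) : Prop :=
  ∀ i j : Fin N, ∃ P : MvPolynomial (Fin n × Fin n) ℂ,
    ∀ g : Matrix.SpecialLinearGroup (Fin n) ℂ,
      (ρ g : Matrix (Fin N) (Fin N) ℂ) i j =
        MvPolynomial.eval (fun q => (g : Matrix (Fin n) (Fin n) ℂ) q.1 q.2) P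

/-- A representation `ρ` of `SL_n(ℤ)` has depth dividing `ℓ` if its restriction to the
principal congruence subgroup `Γ_n(ℓ)` agrees with (the restriction of) an algebraic
representation of `SL_n(ℂ)`. -/
def DepthDvd {n N : ℕ} (ρ : Matrix.SpecialLinearGroup (Fin n) ℤ →* GL (Fin N) ℂ)
    (ℓ : ℕ) : Prop :=
  ∃ ρ' : Matrix.SpecialLinearGroup (Fin n) ℂ →* GL (Fin N) ℂ, IsAlgebraicSL ρ' ∧
    ∀ g ∈ (Matrix.SpecialLinearGroup.map (n := Fin n) (Int.castRingHom (ZMod ℓ))).ker,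
      ρ g = ρ' (Matrix.SpecialLinearGroup.map (Int.castRingHom ℂ) g)

open Matrix
namespace DD
open Matrix.SpecialLinearGroup

section rel
variable {ι R : Type*} [DecidableEq ι] [Fintype ι] [CommRing R]

lemma tv_comm {i j k l : ι} (hij : i ≠ j) (hkl : k ≠ l) (hil : i ≠ l) (hjk : j ≠ k) (s t : R) :
    SpecialLinearGroup.transvection hij s * SpecialLinearGroup.transvection hkl t =
    SpecialLinearGroup.transvection hkl t * SpecialLinearGroup.transvection hij s := by
  apply Subtype.ext
  simp [transvection_coe, mul_add, add_mul, single_mul_single_of_ne _ _ _ _ hjk,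
    single_mul_single_of_ne _ _ _ _ hil.symm]
  abel

lemma tv_rel {i j k : ι} (hij : i ≠ j) (hjk : j ≠ k) (hik : i ≠ k) (s t : R) :
    SpecialLinearGroup.transvection hij s * SpecialLinearGroup.transvection hjk t =
    SpecialLinearGroup.transvection hik (s * t) * SpecialLinearGroup.transvection hjk t
      * SpecialLinearGroup.transvection hij s := by
  apply Subtype.ext
  simp [transvection_coe, mul_add, add_mul, single_mul_single_of_ne _ _ _ _ hik.symm,
    single_mul_single_of_ne _ _ _ _ hjk.symm]
  abel

lemma tv_pow {i j : ι} (hij : i ≠ j) (s : R) (k : ℕ) :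
    SpecialLinearGroup.transvection hij s ^ k = SpecialLinearGroup.transvection hij (k * s) := by
  induction k with
  | zero => simp
  | succ k ih => rw [pow_succ, ih, ← transvection_add]; congr 1; push_cast; ring

lemma tv_zpow {i j : ι} (hij : i ≠ j) (s : R) (k : ℤ) :
    SpecialLinearGroup.transvection hij s ^ k = SpecialLinearGroup.transvection hij (k * s) := by
  cases k with
  | ofNat k => simpa using tv_pow hij s k
  | negSucc k =>
    rw [zpow_negSucc, tv_pow, transvection_inv]; congr 1; push_cast; ring

lemma tv_map {S : Type*} [CommRing S] (f : R →+* S) {i j : ι} (hij : i ≠ j) (s : R) :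
    SpecialLinearGroup.map f (SpecialLinearGroup.transvection hij s) =
      SpecialLinearGroup.transvection hij (f s) := by
  apply Subtype.ext
  ext a b
  simp [transvection_coe, Matrix.single_apply, Matrix.one_apply]
  split_ifs <;> simp

/-- conjugation `e_ij(t) ↦ e_kj(t)` -/
lemma tv_conj_row {i j k : ι} (hij : i ≠ j) (hkj : k ≠ j) (hik : i ≠ k) (t : R) :
    (SpecialLinearGroup.transvection hik (-1) * SpecialLinearGroup.transvection hik.symm 1) *
      SpecialLinearGroup.transvection hij t =
    SpecialLinearGroup.transvection hkj t *
    (SpecialLinearGroup.transvection hik (-1) * SpecialLinearGroup.transvection hik.symm 1) := by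
  have h1 := tv_rel hik.symm hij hkj 1 t
  have h2 := tv_rel hik hkj hij (-1) t
  have h3 := tv_comm hik hij hij hik.symm (-1) t
  have h4 := tv_comm hkj hij hkj hij.symm t (-1 * t)
  calc _ = SpecialLinearGroup.transvection hik (-1) * (SpecialLinearGroup.transvection hik.symm 1 *
      SpecialLinearGroup.transvection hij t) := by group
    _ = (SpecialLinearGroup.transvection hik (-1) * SpecialLinearGroup.transvection hkj (1 * t)) *
      SpecialLinearGroup.transvection hij t * SpecialLinearGroup.transvection hik.symm 1 := by
        rw [h1]; group
    _ = SpecialLinearGroup.transvection hij (-1 * t) * SpecialLinearGroup.transvection hkj t *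
       (SpecialLinearGroup.transvection hik (-1) *
      SpecialLinearGroup.transvection hij t) * SpecialLinearGroup.transvection hik.symm 1 := by
        rw [one_mul, h2]; group
    _ = SpecialLinearGroup.transvection hkj t * (SpecialLinearGroup.transvection hij (-1 * t) *
        SpecialLinearGroup.transvection hij t) * SpecialLinearGroup.transvection hik (-1) *
         SpecialLinearGroup.transvection hik.symm 1 := by
        rw [h3, ← h4]; group
    _ = _ := by
      rw [← transvection_add]; simp [mul_assoc]

/-- conjugation `e_ij(t) ↦ e_ik(t)` -/
lemma tv_conj_col {i j k : ι} (hij : i ≠ j) (hik : i ≠ k) (hjk : j ≠ k) (t : R) :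
    ∃ w : SpecialLinearGroup ι R, w * SpecialLinearGroup.transvection hij t =
    SpecialLinearGroup.transvection hik t * w := by
  have h := tv_conj_row hij.symm hik.symm hjk (-t)
  have e : ∀ {a b : ι} (h : a ≠ b) (s : R), (SpecialLinearGroup.transvection h s).transpose =
    (SpecialLinearGroup.transvection h.symm s) := by
    intro a b h s
    apply Subtype.ext
    simp [SpecialLinearGroup.transpose, transvection_coe]
  have tm : ∀ A B : SpecialLinearGroup ι R, (A * B).transpose = B.transpose * A.transpose := by
    intro A B
    apply Subtype.ext
    exact Matrix.transpose_mul _ _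
  generalize (SpecialLinearGroup.transvection hjk (-1) *
    SpecialLinearGroup.transvection hjk.symm (1 : R)) = W at h
  have h' := congrArg (fun g => (g⁻¹).transpose) h
  simp only [_root_.mul_inv_rev, tm, transvection_inv, neg_neg, e] at h'
  exact ⟨_, h'⟩

end rel

section field
variable {ι F : Type*} [DecidableEq ι] [Fintype ι] [Field F]

lemma diag2n_decompose {i j : ι} (hij : i ≠ j) (a : F) (ha : a ≠ 0) :
    diag2n hij a ha = SpecialLinearGroup.transvection hij a *
      SpecialLinearGroup.transvection hij.symm (- a⁻¹) *
      SpecialLinearGroup.transvection hij a *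
      SpecialLinearGroup.transvection hij (-1) *
      SpecialLinearGroup.transvection hij.symm 1 *
      SpecialLinearGroup.transvection hij (-1) := by
  apply Subtype.ext
  ext x y
  simp [diag2n_coe, transvection_coe, mul_add, add_mul, mul_inv_cancel₀ ha, inv_mul_cancel₀ ha,
    single_mul_single_of_ne _ _ _ _ hij, single_mul_single_of_ne _ _ _ _ hij.symm,
    Matrix.single_apply, Matrix.diagonal_apply, Matrix.one_apply]
  grind

theorem tv_ind [Nontrivial ι] (P : SpecialLinearGroup ι F → Prop)
    (htv : ∀ (i j : ι) (hij : i ≠ j) (a : F), P (SpecialLinearGroup.transvection hij a))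
    (hmul : ∀ A B, P A → P B → P (A * B)) (M : SpecialLinearGroup ι F) : P M := by
  refine diagonal_transvection_induction' P M (fun i j hij c hc => ?_) htv hmul
  rw [diag2n_decompose]
  refine hmul _ _ (hmul _ _ (hmul _ _ (hmul _ _ (hmul _ _ ?_ ?_) ?_) ?_) ?_) ?_
  all_goals exact htv _ _ _ _

end field
end DD

set_option linter.unusedSimpArgs false
open Matrix
namespace DD
open Matrix.SpecialLinearGroup

lemma vmul {ι R : Type*} [DecidableEq ι] [Fintype ι] [CommRing R] (A B : SpecialLinearGroup ι R) :
    (A * B).1 = A.1 * B.1 := rfl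

section emb
variable {R : Type*} [CommRing R]

/-- the embedding of `SL_m` as the upper left block of `SL_{m+1}` -/
def embM {m : ℕ} (g : Matrix (Fin m) (Fin m) R) : Matrix (Fin (m+1)) (Fin (m+1)) R :=
  Matrix.reindex finSumFinEquiv finSumFinEquiv
    (Matrix.fromBlocks g 0 0 (1 : Matrix (Fin 1) (Fin 1) R))

lemma embM_det {m : ℕ} (g : Matrix (Fin m) (Fin m) R) : (embM g).det = g.det := by
  rw [embM, Matrix.det_reindex_self, Matrix.det_fromBlocks_zero₂₁]; simp

lemma embM_mul {m : ℕ} (g h : Matrix (Fin m) (Fin m) R) : embM (g * h) = embM g * embM h := by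
  simp only [embM, Matrix.reindex_apply, Matrix.submatrix_mul_equiv, Matrix.fromBlocks_multiply]
  simp

lemma embM_one {m : ℕ} : embM (1 : Matrix (Fin m) (Fin m) R) = 1 := by
  simp [embM]

lemma embM_cc {m : ℕ} (g : Matrix (Fin m) (Fin m) R) (i j : Fin m) :
    embM g i.castSucc j.castSucc = g i j := by
  simp only [embM, Matrix.reindex_apply, Matrix.submatrix_apply]
  rw [show i.castSucc = Fin.castAdd 1 i from rfl, show j.castSucc = Fin.castAdd 1 j from rfl,
    finSumFinEquiv_symm_apply_castAdd, finSumFinEquiv_symm_apply_castAdd]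
  rfl

lemma embM_lc {m : ℕ} (g : Matrix (Fin m) (Fin m) R) (j : Fin m) :
    embM g (Fin.last m) j.castSucc = 0 := by
  simp only [embM, Matrix.reindex_apply, Matrix.submatrix_apply]
  rw [show Fin.last m = Fin.natAdd m (0 : Fin 1) from rfl,
    show j.castSucc = Fin.castAdd 1 j from rfl,
    finSumFinEquiv_symm_apply_castAdd, finSumFinEquiv_symm_apply_natAdd]
  rfl

lemma embM_cl {m : ℕ} (g : Matrix (Fin m) (Fin m) R) (j : Fin m) :
    embM g j.castSucc (Fin.last m) = 0 := by
  simp only [embM, Matrix.reindex_apply, Matrix.submatrix_apply]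
  rw [show Fin.last m = Fin.natAdd m (0 : Fin 1) from rfl,
    show j.castSucc = Fin.castAdd 1 j from rfl,
    finSumFinEquiv_symm_apply_castAdd, finSumFinEquiv_symm_apply_natAdd]
  rfl

lemma embM_ll {m : ℕ} (g : Matrix (Fin m) (Fin m) R) :
    embM g (Fin.last m) (Fin.last m) = 1 := by
  simp only [embM, Matrix.reindex_apply, Matrix.submatrix_apply]
  rw [show Fin.last m = Fin.natAdd m (0 : Fin 1) from rfl, finSumFinEquiv_symm_apply_natAdd]
  rfl

/-- block embedding as a group homomorphism -/
def emb (m : ℕ) : SpecialLinearGroup (Fin m) R →* SpecialLinearGroup (Fin (m+1)) R where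
  toFun g := ⟨embM g.1, by rw [embM_det]; exact g.2⟩
  map_one' := Subtype.ext embM_one
  map_mul' g h := Subtype.ext (embM_mul g.1 h.1)

lemma emb_coe (m : ℕ) (g : SpecialLinearGroup (Fin m) R) : (emb m g).1 = embM g.1 := rfl

lemma cs_ne {m : ℕ} {i j : Fin m} (hij : i ≠ j) : i.castSucc ≠ j.castSucc :=
  fun h => hij (Fin.castSucc_injective _ h)

lemma emb_tv {m : ℕ} {i j : Fin m} (hij : i ≠ j) (t : R) :
    emb m (SpecialLinearGroup.transvection hij t) =
      SpecialLinearGroup.transvection (cs_ne hij) t := by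
  apply Subtype.ext
  rw [emb_coe]
  ext a b
  refine Fin.lastCases ?_ (fun a => ?_) a <;> refine Fin.lastCases ?_ (fun b => ?_) b
  · rw [embM_ll]; simp [transvection_coe, Matrix.single_apply]
  · rw [embM_lc]
    have := (Fin.castSucc_lt_last b).ne'
    simp [transvection_coe, Matrix.single_apply, Matrix.one_apply, this]
  · rw [embM_cl]
    have := (Fin.castSucc_lt_last a).ne
    simp [transvection_coe, Matrix.single_apply, Matrix.one_apply, this]
  · rw [embM_cc]
    simp [transvection_coe, Matrix.single_apply, Matrix.one_apply]

end emb

/-- congruence subgroup -/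
def Gam (ι : Type*) [DecidableEq ι] [Fintype ι] (q : ℕ) : Subgroup (SpecialLinearGroup ι ℤ) :=
  (SpecialLinearGroup.map (n := ι) (Int.castRingHom (ZMod q))).ker

instance (ι : Type*) [DecidableEq ι] [Fintype ι] (q : ℕ) : (Gam ι q).Normal := by
  unfold Gam; infer_instance

lemma mem_Gam {ι : Type*} [DecidableEq ι] [Fintype ι] {q : ℕ} {g : SpecialLinearGroup ι ℤ} :
    g ∈ Gam ι q ↔ ∀ i j, (q : ℤ) ∣ g i j - (1 : Matrix ι ι ℤ) i j := by
  have key : g ∈ Gam ι q ↔ ∀ i j, (SpecialLinearGroup.map (n := ι) (Int.castRingHom (ZMod q)) g).1 i j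
      = (1 : Matrix ι ι (ZMod q)) i j := by
    rw [Gam, MonoidHom.mem_ker]
    exact ⟨fun h i j => by rw [h]; rfl, fun h => Subtype.ext (by ext i j; exact h i j)⟩
  rw [key]
  refine forall₂_congr fun i j => ?_
  rw [← ZMod.intCast_zmod_eq_zero_iff_dvd]
  simp only [SpecialLinearGroup.map_apply_coe, RingHom.mapMatrix_apply, Matrix.map_apply,
    Int.coe_castRingHom, Int.cast_sub, sub_eq_zero]
  rw [Matrix.one_apply, Matrix.one_apply]
  split_ifs <;> simp

lemma tv_mem_Gam {ι : Type*} [DecidableEq ι] [Fintype ι] {q : ℕ} {i j : ι} (hij : i ≠ j) {t : ℤ}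
    (ht : (q : ℤ) ∣ t) : SpecialLinearGroup.transvection hij t ∈ Gam ι q := by
  rw [mem_Gam]
  intro a b
  rw [transvection_coe]
  simp only [Matrix.add_apply, add_sub_cancel_left, Matrix.single_apply]
  split_ifs
  · exact ht
  · exact dvd_zero _

lemma exists_coprime (a b c : ℤ) (hc : c ≠ 0)
    (h : ∀ p : ℕ, p.Prime → (p : ℤ) ∣ a → (p : ℤ) ∣ b → (p : ℤ) ∣ c → False) :
    ∃ t : ℤ, ∀ p : ℕ, p.Prime → (p : ℤ) ∣ b + t * a → (p : ℤ) ∣ c → False := by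
  classical
  refine ⟨((∏ p ∈ (c.natAbs.primeFactors.filter (fun p : ℕ => ¬ (p : ℤ) ∣ b)), p : ℕ) : ℤ), ?_⟩
  intro p hp h1 h2
  have hpz : Prime (p : ℤ) := Nat.prime_iff_prime_int.mp hp
  by_cases hb : (p : ℤ) ∣ b
  · have h3 := (Int.dvd_add_right hb).mp h1
    rcases hpz.dvd_or_dvd h3 with h4 | h4
    · rw [Int.natCast_dvd_natCast, hp.prime.dvd_finsetProd_iff] at h4
      obtain ⟨r, hr, hpr⟩ := h4
      rw [Finset.mem_filter, Nat.mem_primeFactors] at hr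
      rw [(Nat.prime_dvd_prime_iff_eq hp hr.1.1).mp hpr] at hb
      exact hr.2 hb
    · exact h p hp h4 hb h2
  · have h4 : (p : ℤ) ∣
      ((∏ p ∈ (c.natAbs.primeFactors.filter (fun p : ℕ => ¬ (p : ℤ) ∣ b)), p : ℕ) : ℤ) := by
      rw [Int.natCast_dvd_natCast]
      apply Finset.dvd_prod_of_mem
      rw [Finset.mem_filter, Nat.mem_primeFactors]
      exact ⟨⟨hp, Int.natCast_dvd.mp h2, by simpa using hc⟩, hb⟩
    exact hb ((Int.dvd_add_left (h4.mul_right _)).mp h1)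

section red
variable {ι : Type*} [DecidableEq ι] [Fintype ι]

lemma row_elt {K : Subgroup (SpecialLinearGroup ι ℤ)} {q : ℕ}
    (hK : ∀ (i j : ι) (hij : i ≠ j) (t : ℤ), (q : ℤ) ∣ t →
      SpecialLinearGroup.transvection hij t ∈ K)
    (i : ι) (c : ι → ℤ) (hc : ∀ j, (q : ℤ) ∣ c j) (s : Finset ι) (hs : i ∉ s) :
    ∃ k ∈ K, k.1 = 1 + ∑ j ∈ s, Matrix.single i j (c j) := by
  induction s using Finset.induction_on with
  | empty => exact ⟨1, K.one_mem, by simp⟩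
  | insert a s ha ih =>
    simp only [Finset.mem_insert, not_or] at hs
    obtain ⟨k, hk, e⟩ := ih hs.2
    refine ⟨k * SpecialLinearGroup.transvection hs.1 (c a), K.mul_mem hk (hK _ _ _ _ (hc _)), ?_⟩
    have h0 : (∑ j ∈ s, Matrix.single i j (c j)) * Matrix.single i a (c a) = 0 := by
      rw [Finset.sum_mul]
      refine Finset.sum_eq_zero (fun j hj => ?_)
      apply Matrix.single_mul_single_of_ne
      rintro rfl; exact hs.2 hj
    rw [vmul, transvection_coe, e, Finset.sum_insert ha]
    rw [mul_add, mul_one, add_mul, h0, one_mul]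
    abel

lemma col_elt {K : Subgroup (SpecialLinearGroup ι ℤ)} {q : ℕ}
    (hK : ∀ (i j : ι) (hij : i ≠ j) (t : ℤ), (q : ℤ) ∣ t →
      SpecialLinearGroup.transvection hij t ∈ K)
    (j : ι) (c : ι → ℤ) (hc : ∀ j, (q : ℤ) ∣ c j) (s : Finset ι) (hs : j ∉ s) :
    ∃ k ∈ K, k.1 = 1 + ∑ i ∈ s, Matrix.single i j (c i) := by
  induction s using Finset.induction_on with
  | empty => exact ⟨1, K.one_mem, by simp⟩
  | insert a s ha ih =>
    simp only [Finset.mem_insert, not_or] at hs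
    obtain ⟨k, hk, e⟩ := ih hs.2
    refine ⟨SpecialLinearGroup.transvection (Ne.symm hs.1) (c a) * k,
      K.mul_mem (hK _ _ _ _ (hc _)) hk, ?_⟩
    have h0 : Matrix.single a j (c a) * (∑ i ∈ s, Matrix.single i j (c i)) = 0 := by
      rw [Finset.mul_sum]
      refine Finset.sum_eq_zero (fun i hi => ?_)
      apply Matrix.single_mul_single_of_ne
      rintro rfl; exact hs.2 hi
    rw [vmul, transvection_coe, e, Finset.sum_insert ha]
    rw [add_mul, one_mul, mul_add, h0, mul_one]
    abel

lemma tv_mulVec {i j : ι} (hij : i ≠ j) (t : ℤ) (v : ι → ℤ) :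
    (SpecialLinearGroup.transvection hij t).1 *ᵥ v = v + Pi.single i (t * v j) := by
  rw [transvection_coe, Matrix.add_mulVec, Matrix.one_mulVec, Matrix.single_mulVec_eq]
  ext x; simp [Pi.single_apply]

/-- column reduction -/
lemma col_red {K : Subgroup (SpecialLinearGroup ι ℤ)} {q : ℕ} (hq : q ≠ 0)
    (hK : ∀ (i j : ι) (hij : i ≠ j) (t : ℤ), (q : ℤ) ∣ t →
      SpecialLinearGroup.transvection hij t ∈ K)
    (hconj : ∀ (i j : ι) (hij : i ≠ j), ∀ k ∈ K, SpecialLinearGroup.transvection hij (-1) * k *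
      SpecialLinearGroup.transvection hij 1 ∈ K)
    {x y z : ι} (hxy : x ≠ y) (hxz : x ≠ z) (hyz : y ≠ z)
    (v : ι → ℤ) (hv : ∀ p : ℕ, p.Prime → ∃ i, ¬ (p : ℤ) ∣ v i)
    (hc : ∀ i, i ≠ z → (q : ℤ) ∣ v i) (hz : (q : ℤ) ∣ v z - 1) :
    ∃ k ∈ K, k.1 *ᵥ v = Pi.single z 1 := by
  classical
  -- step 3
  have S3 : ∀ v : ι → ℤ, (∀ i, i ≠ z → (q : ℤ) ∣ v i) → v x + v z = 1 →
      ∃ k ∈ K, k.1 *ᵥ v = Pi.single z 1 := by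
    intro v hc h1
    obtain ⟨k, hk, e⟩ := col_elt hK z (fun i => if i = z then 0 else - v i)
      (fun j => by
        by_cases h : j = z
        · simp [h]
        · simpa [h] using hc j h) (Finset.univ.erase z) (by simp)
    refine ⟨_, hconj z x hxz.symm k hk, ?_⟩
    rw [vmul, vmul, mul_assoc, ← Matrix.mulVec_mulVec,
      ← Matrix.mulVec_mulVec, tv_mulVec hxz.symm 1 v]
    have : k.1 *ᵥ (v + Pi.single z (1 * v x)) = Pi.single z 1 := by
      rw [e, Matrix.add_mulVec, Matrix.one_mulVec, Matrix.sum_mulVec]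
      ext i
      simp only [Matrix.single_mulVec_eq, Pi.add_apply, Finset.sum_apply, Pi.smul_apply,
        Pi.single_apply]
      by_cases hi : i = z
      · subst hi
        rw [Finset.sum_eq_zero]
        · simp; linarith
        · intro j hj
          simp at hj
          simp [Ne.symm hj]
      · rw [Finset.sum_eq_single i]
        · simp [hi]
          rw [add_comm (v z), h1]; ring
        · intro j _ hj
          simp [hj.symm]
        · simp [hi]
    rw [this, tv_mulVec]
    simp [hxz]
  -- step 2
  have S2 : ∀ v : ι → ℤ, (∀ i, i ≠ z → (q : ℤ) ∣ v i) → (q : ℤ) ∣ v z - 1 →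
      (∀ p : ℕ, p.Prime → ∃ i, i ≠ x ∧ ¬ (p : ℤ) ∣ v i) →
      ∃ k ∈ K, k.1 *ᵥ v = Pi.single z 1 := by
    intro v hc hz hv
    have h1 : Ideal.span (Set.range (fun i => if i = x then 0 else v i)) = ⊤ := by
      obtain ⟨d, hd⟩ := IsPrincipalIdealRing.principal
        (Ideal.span (Set.range (fun i => if i = x then 0 else v i)))
      change _ = Ideal.span {d} at hd
      rw [hd, Ideal.span_singleton_eq_top]
      by_contra hu
      rw [Int.isUnit_iff_natAbs_eq] at hu
      obtain ⟨p, hp, hpd⟩ := Nat.exists_prime_and_dvd hu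
      obtain ⟨i, hi, hpi⟩ := hv p hp
      apply hpi
      have : v i ∈ Ideal.span {d} := by
        rw [← hd]; exact Ideal.subset_span ⟨i, by simp [hi]⟩
      rw [Ideal.mem_span_singleton] at this
      exact (Int.natCast_dvd.mpr hpd).trans this
    have h2 : (1 : ℤ) ∈ Ideal.span (Set.range (fun i => if i = x then 0 else v i)) := by
      rw [h1]; trivial
    rw [Ideal.mem_span_range_iff_exists_fun] at h2
    obtain ⟨c, hcs⟩ := h2
    have hs : (q : ℤ) ∣ 1 - v z - v x := by
      have := hc x hxz
      have := dvd_add hz this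
      rw [show 1 - v z - v x = -(v z - 1 + v x) by ring, dvd_neg]
      exact this
    obtain ⟨k, hk, e⟩ := row_elt hK x (fun i => (1 - v z - v x) * c i)
      (fun j => hs.mul_right _) (Finset.univ.erase x) (by simp)
    have ev : k.1 *ᵥ v = v + Pi.single x (1 - v z - v x) := by
      rw [e, Matrix.add_mulVec, Matrix.one_mulVec, Matrix.sum_mulVec]
      congr 1
      simp only [Matrix.single_mulVec_eq]
      ext i
      simp only [Finset.sum_apply, Pi.smul_apply, Pi.single_apply]
      by_cases hi : i = x
      · subst hi
        simp only [if_true, smul_eq_mul, mul_one]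
        generalize 1 - v z - v i = D
        rw [show D = D * 1 by ring]
        conv_rhs => rw [← hcs, Finset.mul_sum]
        rw [← Finset.add_sum_erase _ _ (Finset.mem_univ i)]
        simp only [if_true, mul_zero, zero_add]
        apply Finset.sum_congr rfl
        intro j hj
        simp at hj
        simp [hj]; ring
      · simp [hi]
    obtain ⟨k2, hk2, e2⟩ := S3 (v + Pi.single x (1 - v z - v x)) (by
      intro i hi
      by_cases hx : i = x
      · subst hx; simp only [Pi.add_apply, Pi.single_eq_same]
        exact dvd_add (hc _ hi) hs
      · simpa [hx] using hc i hi) (by simp [hxz.symm])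
    exact ⟨k2 * k, K.mul_mem hk2 hk, by
      rw [vmul, ← Matrix.mulVec_mulVec, ev, e2]⟩
  -- step 1
  have S1 : ∀ v : ι → ℤ, (∀ i, i ≠ z → (q : ℤ) ∣ v i) → (q : ℤ) ∣ v z - 1 →
      (∀ p : ℕ, p.Prime → ∃ i, ¬ (p : ℤ) ∣ v i) → v z ≠ 0 →
      ∃ k ∈ K, k.1 *ᵥ v = Pi.single z 1 := by
    intro v hc hz hv h0
    obtain ⟨d, hd⟩ := IsPrincipalIdealRing.principal
        (Ideal.span (Set.range (fun i => if i = x ∨ i = y then 0 else v i)))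
    change _ = Ideal.span {d} at hd
    have hdv : ∀ i, i ≠ x → i ≠ y → d ∣ v i := by
      intro i hx hy
      rw [← Ideal.mem_span_singleton, ← hd]
      exact Ideal.subset_span ⟨i, by simp [hx, hy]⟩
    have hdd : ∀ p : ℤ, (∀ i, i ≠ x → i ≠ y → p ∣ v i) → p ∣ d := by
      intro p h
      have : Ideal.span (Set.range (fun i => if i = x ∨ i = y then 0 else v i)) ≤
          Ideal.span {p} := by
        rw [Ideal.span_le]
        rintro _ ⟨i, rfl⟩
        simp only [SetLike.mem_coe, Ideal.mem_span_singleton]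
        split_ifs with h'
        · exact dvd_zero _
        · push Not at h'
          exact h i h'.1 h'.2
      rw [hd, Ideal.span_singleton_le_span_singleton] at this
      exact this
    have hd0 : d ≠ 0 := by
      rintro rfl
      exact h0 (zero_dvd_iff.mp (hdv z hxz.symm hyz.symm))
    obtain ⟨t, ht⟩ := exists_coprime (q * v x) (v y) d hd0 (by
      intro p hp h1 h2 h3
      have hpz : Prime (p : ℤ) := Nat.prime_iff_prime_int.mp hp
      rcases hpz.dvd_or_dvd h1 with h1 | h1
      · have h4 := h1.trans hz
        have h5 := h3.trans (hdv z hxz.symm hyz.symm)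
        have h6 := (Int.dvd_iff_dvd_of_dvd_sub h4).mp h5
        exact hpz.not_dvd_one h6
      · obtain ⟨i, hi⟩ := hv p hp
        by_cases hx : i = x
        · exact hi (hx ▸ h1)
        by_cases hy : i = y
        · exact hi (hy ▸ h2)
        exact hi (h3.trans (hdv i hx hy)))
    obtain ⟨k2, hk2, e2⟩ := S2 (v + Pi.single y (t * q * v x)) (by
      intro i hi
      by_cases hx : i = y
      · subst hx; simp only [Pi.add_apply, Pi.single_eq_same]
        exact dvd_add (hc _ hi) ⟨t * v x, by ring⟩
      · simpa [hx] using hc i hi) (by simpa [hyz.symm] using hz) (by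
      intro p hp
      by_contra hcon
      push Not at hcon
      refine ht p hp ?_ (hdd p ?_)
      · have := hcon y hxy.symm
        simp only [Pi.add_apply, Pi.single_eq_same] at this
        convert this using 1; ring
      · intro i hx hy
        simpa [hy] using hcon i hx)
    exact ⟨k2 * _, K.mul_mem hk2 (hK y x hxy.symm (t * q) (Dvd.intro_left _ rfl)), by
      rw [vmul, ← Matrix.mulVec_mulVec, tv_mulVec, e2]⟩
  by_cases h0 : v z = 0
  · obtain ⟨i, hi⟩ := hv 2 Nat.prime_two
    have hiz : z ≠ i := by rintro rfl; simp [h0] at hi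
    have hi0 : v i ≠ 0 := by intro h; simp [h] at hi
    obtain ⟨k2, hk2, e2⟩ := S1 (v + Pi.single z (q * v i)) (by
      intro j hj
      simpa [hj] using hc j hj) (by
        simp only [Pi.add_apply, Pi.single_eq_same]
        have := dvd_add hz (Dvd.intro (v i) rfl : (q:ℤ) ∣ q * v i)
        rw [show v z + q * v i - 1 = v z - 1 + q * v i by ring]
        exact this) (by
      intro p hp
      by_contra hcon
      push Not at hcon
      obtain ⟨j, hj⟩ := hv p hp
      by_cases hjz : j = z
      · subst hjz; simp [h0] at hj
      · have := hcon j
        simp [hjz] at this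
        exact hj this) (by simp [h0, hq, hi0])
    exact ⟨k2 * _, K.mul_mem hk2 (hK z i hiz q dvd_rfl), by
      rw [vmul, ← Matrix.mulVec_mulVec, tv_mulVec, e2]⟩
  · exact S1 v hc hz hv h0

end red
end DD

set_option linter.unusedSimpArgs false
open Matrix
namespace DD
open Matrix.SpecialLinearGroup

lemma col_prim {ι : Type*} [DecidableEq ι] [Fintype ι] (g : SpecialLinearGroup ι ℤ) (z : ι)
    (p : ℕ) (hp : p.Prime) : ∃ i, ¬ (p : ℤ) ∣ g.1 i z := by
  by_contra hcon
  push Not at hcon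
  have h : (g⁻¹ * g).1 z z = 1 := by rw [inv_mul_cancel]; simp
  rw [vmul, Matrix.mul_apply] at h
  have h2 : (p : ℤ) ∣ 1 := by
    rw [← h]
    exact Finset.dvd_sum fun i _ => (hcon i).mul_left _
  exact (Nat.prime_iff_prime_int.mp hp).not_dvd_one h2

lemma emb_of {m : ℕ} (g : SpecialLinearGroup (Fin (m+1)) ℤ)
    (h1 : ∀ i : Fin m, g.1 i.castSucc (Fin.last m) = 0)
    (h2 : ∀ i : Fin m, g.1 (Fin.last m) i.castSucc = 0)
    (h3 : g.1 (Fin.last m) (Fin.last m) = 1) :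
    ∃ B : SpecialLinearGroup (Fin m) ℤ, emb m B = g ∧ ∀ i j, B.1 i j = g.1 i.castSucc j.castSucc := by
  have e : embM (g.1.submatrix Fin.castSucc Fin.castSucc) = g.1 := by
    ext a b
    refine Fin.lastCases ?_ (fun a => ?_) a <;> refine Fin.lastCases ?_ (fun b => ?_) b
    · rw [embM_ll, h3]
    · rw [embM_lc, h2]
    · rw [embM_cl, h1]
    · rw [embM_cc]; rfl
  refine ⟨⟨g.1.submatrix Fin.castSucc Fin.castSucc, ?_⟩, ?_, ?_⟩
  · rw [← embM_det, e]; exact g.2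
  · exact Subtype.ext e
  · intro i j; rfl

lemma red_step {m : ℕ} {K : Subgroup (SpecialLinearGroup (Fin (m+3)) ℤ)} {q : ℕ} (hq : q ≠ 0)
    (hK : ∀ (i j : Fin (m+3)) (hij : i ≠ j) (t : ℤ), (q : ℤ) ∣ t →
      SpecialLinearGroup.transvection hij t ∈ K)
    (hconj : ∀ (i j : Fin (m+3)) (hij : i ≠ j), ∀ k ∈ K, SpecialLinearGroup.transvection hij (-1) * k *
      SpecialLinearGroup.transvection hij 1 ∈ K)
    (g : SpecialLinearGroup (Fin (m+3)) ℤ) (hg : g ∈ Gam _ q) :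
    ∃ k₁ ∈ K, ∃ k₂ ∈ K, ∃ B ∈ Gam (Fin (m+2)) q, k₁ * g * k₂ = emb (m+2) B := by
  have hK' : ∀ (i j : Fin (m+3)) (hij : i ≠ j) (t : ℤ), (q : ℤ) ∣ t →
      SpecialLinearGroup.transvection hij t ∈ K ⊓ Gam _ q :=
    fun i j hij t ht => ⟨hK i j hij t ht, tv_mem_Gam hij ht⟩
  have hconj' : ∀ (i j : Fin (m+3)) (hij : i ≠ j), ∀ k ∈ K ⊓ Gam _ q,
      SpecialLinearGroup.transvection hij (-1) * k *
      SpecialLinearGroup.transvection hij 1 ∈ K ⊓ Gam _ q := by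
    intro i j hij k hk
    refine ⟨hconj i j hij k hk.1, ?_⟩
    have := (inferInstance : (Gam (Fin (m+3)) q).Normal).conj_mem k hk.2
      (SpecialLinearGroup.transvection hij (-1))
    rwa [transvection_inv, neg_neg] at this
  have hx : (0 : Fin (m+3)) ≠ Fin.last (m+2) := by
    intro h; have := congrArg Fin.val h; simp at this
  have hy : (1 : Fin (m+3)) ≠ Fin.last (m+2) := by
    intro h; have := congrArg Fin.val h
    simp at this
  obtain ⟨k₁, hk₁, e₁⟩ := col_red hq hK' hconj' (zero_ne_one : (0 : Fin (m+3)) ≠ 1) hx hy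
    (fun i => g.1 i (Fin.last (m+2))) (col_prim g _)
    (fun i hi => by
      have := mem_Gam.mp hg i (Fin.last _)
      rwa [Matrix.one_apply_ne hi, sub_zero] at this)
    (by
      have := mem_Gam.mp hg (Fin.last _) (Fin.last _)
      rwa [Matrix.one_apply_eq] at this)
  have hg' : k₁ * g ∈ Gam _ q := (Gam _ q).mul_mem hk₁.2 hg
  set g' := k₁ * g with hg'def
  have hcol : ∀ i, g'.1 i (Fin.last (m+2)) = (Pi.single (Fin.last (m+2)) 1 : Fin (m+3) → ℤ) i := by
    intro i; rw [← e₁, hg'def, vmul]; rfl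
  obtain ⟨k₂, hk₂, e₂⟩ := row_elt hK' (Fin.last (m+2))
    (fun j => if j = Fin.last (m+2) then 0 else - g'.1 (Fin.last (m+2)) j) (fun j => by
      by_cases h : j = Fin.last _
      · simp [h]
      · have := mem_Gam.mp hg' (Fin.last _) j
        rw [Matrix.one_apply_ne (Ne.symm h), sub_zero] at this
        simpa [h] using this) (Finset.univ.erase (Fin.last (m+2))) (by simp)
  have hent : ∀ a b, (g' * k₂).1 a b = g'.1 a b +
      if b = Fin.last (m+2) then 0 else - g'.1 a (Fin.last _) * g'.1 (Fin.last _) b := by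
    intro a b
    rw [vmul, e₂, mul_add, mul_one, Matrix.add_apply, Finset.mul_sum, Matrix.sum_apply]
    congr 1
    by_cases hb : b = Fin.last _
    · simp only [hb, if_true]
      refine Finset.sum_eq_zero fun j hj => ?_
      rw [Matrix.mul_single_apply_of_ne]
      simp at hj
      exact Ne.symm hj
    · rw [Finset.sum_eq_single b]
      · rw [Matrix.mul_single_apply_same]; simp [hb]
      · intro j _ hj
        rw [Matrix.mul_single_apply_of_ne]
        exact Ne.symm hj
      · simp [hb]
  obtain ⟨B, hB, hB'⟩ := emb_of (g' * k₂) (by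
      intro i; rw [hent, hcol]; simp [(Fin.castSucc_lt_last i).ne]) (by
      intro i; rw [hent, hcol]; simp [(Fin.castSucc_lt_last i).ne]) (by
      rw [hent, hcol]; simp)
  refine ⟨k₁, hk₁.1, k₂, hk₂.1, B, ?_, hB.symm⟩
  rw [mem_Gam]
  intro i j
  change _ ∣ B.1 i j - _
  have := mem_Gam.mp ((Gam _ q).mul_mem hg' hk₂.2) i.castSucc j.castSucc
  rw [hB']
  rw [Matrix.one_apply] at this ⊢
  simpa using this

lemma csp_of_base {q : ℕ} (hq : q ≠ 0)
    (base : ∀ K : Subgroup (SpecialLinearGroup (Fin 3) ℤ), K.Normal →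
      (∀ (i j : Fin 3) (hij : i ≠ j) (t : ℤ), (q : ℤ) ∣ t →
      SpecialLinearGroup.transvection hij t ∈ K) → Gam (Fin 3) q ≤ K) (m : ℕ) :
    ∀ K : Subgroup (SpecialLinearGroup (Fin (m+3)) ℤ), K.Normal →
      (∀ (i j : Fin (m+3)) (hij : i ≠ j) (t : ℤ), (q : ℤ) ∣ t →
      SpecialLinearGroup.transvection hij t ∈ K) → Gam (Fin (m+3)) q ≤ K := by
  induction m with
  | zero => exact base
  | succ m ih =>
    intro K hN hK g hg
    obtain ⟨k₁, hk₁, k₂, hk₂, B, hB, e⟩ := red_step (m := m+1) hq hK (by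
      intro i j hij k hk
      have := hN.conj_mem k hk (SpecialLinearGroup.transvection hij (-1))
      rwa [transvection_inv, neg_neg] at this) g hg
    have hB' : B ∈ K.comap (emb (m+3)) := by
      refine ih (K.comap (emb (m+3))) (hN.comap _) ?_ hB
      intro i j hij t ht
      rw [Subgroup.mem_comap, emb_tv]
      exact hK _ _ _ _ ht
    rw [Subgroup.mem_comap, ← e] at hB'
    rwa [K.mul_mem_cancel_right hk₂, K.mul_mem_cancel_left hk₁] at hB'

/-- elementary subgroup is everything -/
lemma gen_top (m : ℕ) : ∀ K : Subgroup (SpecialLinearGroup (Fin (m+2)) ℤ),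
      (∀ (i j : Fin (m+2)) (hij : i ≠ j) (t : ℤ), SpecialLinearGroup.transvection hij t ∈ K) →
      ∀ g, g ∈ K := by
  induction m with
  | zero =>
    intro K hK g
    have h : (⊤ : Subgroup (SpecialLinearGroup (Fin 2) ℤ)) ≤ K := by
      rw [← SpecialLinearGroup.SL2Z_generators, Subgroup.closure_le]
      have hT : ModularGroup.T = SpecialLinearGroup.transvection (zero_ne_one : (0 : Fin 2) ≠ 1) 1 := by
        apply Subtype.ext
        ext a b
        fin_cases a <;> fin_cases b <;> simp [ModularGroup.T, transvection_coe]
      have hS : ModularGroup.S = SpecialLinearGroup.transvection (zero_ne_one : (0 : Fin 2) ≠ 1) (-1) *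
        SpecialLinearGroup.transvection (one_ne_zero : (1 : Fin 2) ≠ 0) 1 *
        SpecialLinearGroup.transvection (zero_ne_one : (0 : Fin 2) ≠ 1) (-1) := by
        apply Subtype.ext
        ext a b
        fin_cases a <;> fin_cases b <;> simp [ModularGroup.S, transvection_coe, Matrix.mul_apply, Fin.sum_univ_two, Matrix.single_apply, Matrix.one_apply]
      intro x hx
      rcases hx with rfl | hx
      · rw [hS]
        exact K.mul_mem (K.mul_mem (hK _ _ _ _) (hK _ _ _ _)) (hK _ _ _ _)
      · rw [Set.mem_singleton_iff] at hx
        rw [hx, hT]; exact hK _ _ _ _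
    exact h trivial
  | succ m ih =>
    intro K hK g
    obtain ⟨k₁, hk₁, k₂, hk₂, B, hB, e⟩ := red_step (m := m) (q := 1) one_ne_zero
      (fun i j hij t _ => hK i j hij t) (by
      intro i j hij k hk
      exact K.mul_mem (K.mul_mem (hK _ _ _ _) hk) (hK _ _ _ _)) g (by
      rw [mem_Gam]; intro i j; simp)
    have hB' : B ∈ K.comap (emb (m+2)) := by
      refine ih (K.comap (emb (m+2))) ?_ B
      intro i j hij t
      rw [Subgroup.mem_comap, emb_tv]
      exact hK _ _ _ _
    rw [Subgroup.mem_comap, ← e] at hB'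
    rwa [K.mul_mem_cancel_right hk₂, K.mul_mem_cancel_left hk₁] at hB'

end DD

set_option linter.unusedSimpArgs false
set_option linter.unusedTactic false
set_option linter.unreachableTactic false
open Matrix
namespace DD
open Matrix.SpecialLinearGroup

section men

lemma tm01 {R : Type*} [CommRing R] (h : (0 : Fin 3) ≠ 1) (t : R) : (SpecialLinearGroup.transvection h t).1 =
    !![1, t, 0; 0, 1, 0; 0, 0, 1] := by
  ext a b; fin_cases a <;> fin_cases b <;>
    simp [transvection_coe, Matrix.single_apply, Matrix.one_apply]
lemma tm02 {R : Type*} [CommRing R] (h : (0 : Fin 3) ≠ 2) (t : R) : (SpecialLinearGroup.transvection h t).1 =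
    !![1, 0, t; 0, 1, 0; 0, 0, 1] := by
  ext a b; fin_cases a <;> fin_cases b <;>
    simp [transvection_coe, Matrix.single_apply, Matrix.one_apply]
lemma tm10 {R : Type*} [CommRing R] (h : (1 : Fin 3) ≠ 0) (t : R) : (SpecialLinearGroup.transvection h t).1 =
    !![1, 0, 0; t, 1, 0; 0, 0, 1] := by
  ext a b; fin_cases a <;> fin_cases b <;>
    simp [transvection_coe, Matrix.single_apply, Matrix.one_apply]
lemma tm12 {R : Type*} [CommRing R] (h : (1 : Fin 3) ≠ 2) (t : R) : (SpecialLinearGroup.transvection h t).1 =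
    !![1, 0, 0; 0, 1, t; 0, 0, 1] := by
  ext a b; fin_cases a <;> fin_cases b <;>
    simp [transvection_coe, Matrix.single_apply, Matrix.one_apply]
lemma tm20 {R : Type*} [CommRing R] (h : (2 : Fin 3) ≠ 0) (t : R) : (SpecialLinearGroup.transvection h t).1 =
    !![1, 0, 0; 0, 1, 0; t, 0, 1] := by
  ext a b; fin_cases a <;> fin_cases b <;>
    simp [transvection_coe, Matrix.single_apply, Matrix.one_apply]
lemma tm21 {R : Type*} [CommRing R] (h : (2 : Fin 3) ≠ 1) (t : R) : (SpecialLinearGroup.transvection h t).1 =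
    !![1, 0, 0; 0, 1, 0; 0, t, 1] := by
  ext a b; fin_cases a <;> fin_cases b <;>
    simp [transvection_coe, Matrix.single_apply, Matrix.one_apply]

lemma n01 : (0 : Fin 3) ≠ 1 := by decide
lemma n02 : (0 : Fin 3) ≠ 2 := by decide
lemma n12 : (1 : Fin 3) ≠ 2 := by decide

/-- 12 block -/
def MA (a b c d : ℤ) (h : a * d - b * c = 1) : SpecialLinearGroup (Fin 3) ℤ :=
  ⟨!![a, b, 0; c, d, 0; 0, 0, 1], by rw [Matrix.det_fin_three]; simp; linarith⟩
/-- 13 block -/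
def MB (a b c d : ℤ) (h : a * d - b * c = 1) : SpecialLinearGroup (Fin 3) ℤ :=
  ⟨!![a, 0, b; 0, 1, 0; c, 0, d], by rw [Matrix.det_fin_three]; simp; linarith⟩
/-- permutation -/
def WP : SpecialLinearGroup (Fin 3) ℤ :=
  ⟨!![1, 0, 0; 0, 0, -1; 0, 1, 0], by rw [Matrix.det_fin_three]; simp⟩
/-- sign change -/
def WD : SpecialLinearGroup (Fin 3) ℤ :=
  ⟨!![1, 0, 0; 0, -1, 0; 0, 0, -1], by rw [Matrix.det_fin_three]; simp⟩

lemma MA_coe (a b c d : ℤ) (h) : (MA a b c d h).1 = !![a, b, 0; c, d, 0; 0, 0, 1] := rfl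
lemma MB_coe (a b c d : ℤ) (h) : (MB a b c d h).1 = !![a, 0, b; 0, 1, 0; c, 0, d] := rfl
lemma WP_coe : (WP).1 = !![1, 0, 0; 0, 0, -1; 0, 1, 0] := rfl
lemma WD_coe : (WD).1 = !![1, 0, 0; 0, -1, 0; 0, 0, -1] := rfl

lemma MB_W (a b c d : ℤ) (h) : WP * MA a b c d h = MB a b c d h * WP := by
  apply Subtype.ext
  rw [vmul, vmul, MA_coe, MB_coe, WP_coe, Matrix.mul_fin_three, Matrix.mul_fin_three]
  simp

lemma MD_W (a b c d : ℤ) (h) (h') : WD * MA a b c d h = MA a (-b) (-c) d h' * WD := by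
  apply Subtype.ext
  rw [vmul, vmul, MA_coe, MA_coe, WD_coe, Matrix.mul_fin_three, Matrix.mul_fin_three]
  simp

lemma MA_same (a b c d c' d' : ℤ) (h) (h') :
    MA a b c' d' h' = SpecialLinearGroup.transvection n01.symm (c' * d - d' * c) * MA a b c d h := by
  apply Subtype.ext
  rw [vmul, MA_coe, MA_coe, tm10, Matrix.mul_fin_three]
  have e1 : c' = (c' * d - d' * c) * a + c := by linear_combination (-c') * h + c * h'
  have e2 : d' = (c' * d - d' * c) * b + d := by linear_combination (-d') * h + d * h'
  simp [← e1, ← e2]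

lemma MA_conj (a b c d t : ℤ) (h) (h') :
    SpecialLinearGroup.transvection n01.symm t * MA (a + t * b) b (c + t * d - t * (a + t * b)) (d - t * b) h'
     = MA a b c d h * SpecialLinearGroup.transvection n01.symm t := by
  apply Subtype.ext
  rw [vmul, vmul, MA_coe, MA_coe, tm10, Matrix.mul_fin_three, Matrix.mul_fin_three]
  ext i j; fin_cases i <;> fin_cases j <;> simp <;> ring

lemma MA_right (a b c d t : ℤ) (h) (h') :
    MA a (b + t * a) c (d + t * c) h'
     = MA a b c d h * SpecialLinearGroup.transvection n01 t := by
  apply Subtype.ext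
  rw [vmul, MA_coe, MA_coe, tm01, Matrix.mul_fin_three]
  ext i j; fin_cases i <;> fin_cases j <;> simp <;> ring

lemma MA_unip (b : ℤ) (h) : MA 1 b 0 1 h = SpecialLinearGroup.transvection n01 b := by
  apply Subtype.ext
  rw [MA_coe, tm01]

lemma MA_02 (a b c d t : ℤ) (h) : MA a b c d h * SpecialLinearGroup.transvection n02 t =
    SpecialLinearGroup.transvection n12 (c * t) * SpecialLinearGroup.transvection n02 ((a - 1) * t) *
    SpecialLinearGroup.transvection n02 t * MA a b c d h := by
  apply Subtype.ext
  simp only [vmul, MA_coe, tm02, tm12, Matrix.mul_fin_three]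
  ext i j; fin_cases i <;> fin_cases j <;> simp <;> ring

lemma MA_12 (a b c d t : ℤ) (h) : MA a b c d h * SpecialLinearGroup.transvection n12 t =
    SpecialLinearGroup.transvection n02 (b * t) * SpecialLinearGroup.transvection n12 ((d - 1) * t) *
    SpecialLinearGroup.transvection n12 t * MA a b c d h := by
  apply Subtype.ext
  simp only [vmul, MA_coe, tm02, tm12, Matrix.mul_fin_three]
  ext i j; fin_cases i <;> fin_cases j <;> simp <;> ring

lemma MA_20 (a b c d t : ℤ) (h) : SpecialLinearGroup.transvection n02.symm t * MA a b c d h =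
    MA a b c d h * SpecialLinearGroup.transvection n02.symm t *
     SpecialLinearGroup.transvection n02.symm ((a-1) * t) * SpecialLinearGroup.transvection n12.symm (b * t) := by
  apply Subtype.ext
  simp only [vmul, MA_coe, tm20, tm21, Matrix.mul_fin_three]
  ext i j; fin_cases i <;> fin_cases j <;> simp <;> ring

lemma MA_21 (a b c d t : ℤ) (h) : SpecialLinearGroup.transvection n12.symm t * MA a b c d h =
    MA a b c d h * SpecialLinearGroup.transvection n12.symm t *
     SpecialLinearGroup.transvection n12.symm ((d-1) * t) * SpecialLinearGroup.transvection n02.symm (c * t) := by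
  apply Subtype.ext
  simp only [vmul, MA_coe, tm20, tm21, Matrix.mul_fin_three]
  ext i j; fin_cases i <;> fin_cases j <;> simp <;> ring

lemma MA_mult (a₁ a₂ b c₁ d₁ c₂ d₂ c d : ℤ) (h₁) (h₂) (h) :
    MB a₂ b c₂ d₂ h₂ * MA a₁ b c₁ d₁ h₁ * SpecialLinearGroup.transvection n12.symm (-a₂) =
    SpecialLinearGroup.transvection n01.symm (c₁ * d) *
    SpecialLinearGroup.transvection n02.symm (c₂ * a₁ * d - d₂ * c) *
    SpecialLinearGroup.transvection n12 (1 - d₁) *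
    SpecialLinearGroup.transvection n12.symm (-1) *
    SpecialLinearGroup.transvection n12 (1 - a₁) * MB (a₁ * a₂) b c d h := by
  apply Subtype.ext
  simp only [vmul, MA_coe, MB_coe, tm10, tm12, tm20, tm21, Matrix.mul_fin_three]
  ext i j; fin_cases i <;> fin_cases j <;> simp
  · ring
  · ring
  · linear_combination (-c₁) * h + c * h₁
  · linear_combination (d * h₁)
  · linear_combination (-c₂ * a₁) * h + a₁ * c * h₂
  · linear_combination (-1) * h₂
  · linear_combination (-d₂) * h + a₁ * d * h₂

variable {G : Type*} [Group G] (σ : SpecialLinearGroup (Fin 3) ℤ →* G) (q : ℕ)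

/-- kills elementary matrices of level q -/
def Kills : Prop := ∀ (i j : Fin 3) (hij : i ≠ j) (t : ℤ), (q : ℤ) ∣ t →
      σ (SpecialLinearGroup.transvection hij t) = 1

variable {σ q}

lemma MA_central (hσ : Kills σ q) (a b c d : ℤ) (h) (ha : (q : ℤ) ∣ a - 1) (hb : (q : ℤ) ∣ b)
    (hc : (q : ℤ) ∣ c) (hd : (q : ℤ) ∣ d - 1) (g) :
    σ (MA a b c d h) * σ g = σ g * σ (MA a b c d h) := by
  have h02 : ∀ t, σ (MA a b c d h) * σ (SpecialLinearGroup.transvection n02 t) =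
      σ (SpecialLinearGroup.transvection n02 t) * σ (MA a b c d h) := by
    intro t
    rw [← map_mul, MA_02, map_mul, map_mul, map_mul, hσ _ _ n12 _ (hc.mul_right _),
      hσ _ _ n02 _ (ha.mul_right _)]; simp
  have h12 : ∀ t, σ (MA a b c d h) * σ (SpecialLinearGroup.transvection n12 t) =
      σ (SpecialLinearGroup.transvection n12 t) * σ (MA a b c d h) := by
    intro t
    rw [← map_mul, MA_12, map_mul, map_mul, map_mul, hσ _ _ n02 _ (hb.mul_right _),
      hσ _ _ n12 _ (hd.mul_right _)]; simp
  have h20 : ∀ t, σ (MA a b c d h) * σ (SpecialLinearGroup.transvection n02.symm t) =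
      σ (SpecialLinearGroup.transvection n02.symm t) * σ (MA a b c d h) := by
    intro t
    symm
    rw [← map_mul, MA_20, map_mul, map_mul, map_mul, hσ _ _ n12.symm _ (hb.mul_right _),
      hσ _ _ n02.symm _ (ha.mul_right _)]; simp
  have h21 : ∀ t, σ (MA a b c d h) * σ (SpecialLinearGroup.transvection n12.symm t) =
      σ (SpecialLinearGroup.transvection n12.symm t) * σ (MA a b c d h) := by
    intro t
    symm
    rw [← map_mul, MA_21, map_mul, map_mul, map_mul, hσ _ _ n02.symm _ (hc.mul_right _),
      hσ _ _ n12.symm _ (hd.mul_right _)]; simp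
  let C : Subgroup (SpecialLinearGroup (Fin 3) ℤ) :=
    (Subgroup.centralizer {σ (MA a b c d h)}).comap σ
  have hC : ∀ g, g ∈ C ↔ σ (MA a b c d h) * σ g = σ g * σ (MA a b c d h) := by
    intro g
    simp only [C, Subgroup.mem_comap, Subgroup.mem_centralizer_iff, Set.mem_singleton_iff, forall_eq]
  have hcom : ∀ {i j k : Fin 3} (hij : i ≠ j) (hjk : j ≠ k) (hik : i ≠ k) (t : ℤ),
      SpecialLinearGroup.transvection hij t ∈ C → SpecialLinearGroup.transvection hjk 1 ∈ C →
      SpecialLinearGroup.transvection hik t ∈ C := by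
    intro i j k hij hjk hik t h1 h2
    have := tv_rel hij hjk hik t 1
    rw [mul_one] at this
    have h3 := C.mul_mem h1 h2
    rw [this] at h3
    rwa [C.mul_mem_cancel_right h1, C.mul_mem_cancel_right h2] at h3
  rw [← hC]
  apply gen_top 1
  intro i j hij t
  have m02 : ∀ t, SpecialLinearGroup.transvection n02 t ∈ C := fun t => (hC _).mpr (h02 t)
  have m12 : ∀ t, SpecialLinearGroup.transvection n12 t ∈ C := fun t => (hC _).mpr (h12 t)
  have m20 : ∀ t, SpecialLinearGroup.transvection n02.symm t ∈ C := fun t => (hC _).mpr (h20 t)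
  have m21 : ∀ t, SpecialLinearGroup.transvection n12.symm t ∈ C := fun t => (hC _).mpr (h21 t)
  have m01 : ∀ t, SpecialLinearGroup.transvection n01 t ∈ C :=
    fun t => hcom n02 n12.symm n01 t (m02 t) (m21 1)
  have m10 : ∀ t, SpecialLinearGroup.transvection n01.symm t ∈ C :=
    fun t => hcom n12 n02.symm n01.symm t (m12 t) (m20 1)
  fin_cases i <;> fin_cases j <;> first | exact absurd rfl hij | skip
  · exact m01 t
  · exact m02 t
  · exact m10 t
  · exact m12 t
  · exact m20 t
  · exact m21 t

open Classical in
/-- the Mennicke symbol -/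
noncomputable def br (σ : SpecialLinearGroup (Fin 3) ℤ →* G) (q : ℕ) (a b : ℤ) : G :=
  if h : ∃ c d, a * d - b * c = 1 ∧ (q : ℤ) ∣ c ∧ (q : ℤ) ∣ d - 1 then
    σ (MA a b h.choose h.choose_spec.choose h.choose_spec.choose_spec.1) else 1

lemma br_eq (hσ : Kills σ q) (a b c d : ℤ) (h) 
    (hc : (q : ℤ) ∣ c) (hd : (q : ℤ) ∣ d - 1) : σ (MA a b c d h) = br σ q a b := by
  have H : ∃ c d, a * d - b * c = 1 ∧ (q : ℤ) ∣ c ∧ (q : ℤ) ∣ d - 1 := ⟨c, d, h, hc, hd⟩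
  rw [br, dif_pos H]
  rw [MA_same a b _ _ c d H.choose_spec.choose_spec.1 h, map_mul, hσ, one_mul]
  exact dvd_sub (hc.mul_right _) (H.choose_spec.choose_spec.2.1.mul_left _)

/-- admissible pairs -/
def Good (q : ℕ) (a b : ℤ) : Prop := (q : ℤ) ∣ a - 1 ∧ (q : ℤ) ∣ b ∧ IsCoprime a b

lemma Good.ex {a b : ℤ} (hg : Good q a b) :
    ∃ c d, a * d - b * c = 1 ∧ (q : ℤ) ∣ c ∧ (q : ℤ) ∣ d - 1 := by
  obtain ⟨ha, hb, u, v, h⟩ := hg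
  refine ⟨-v - (-v) * a, u + v * b, by linear_combination h, ?_, ?_⟩
  · rw [show -v - (-v) * a = v * (a - 1) by ring]; exact ha.mul_left _
  · rw [show u + v * b - 1 = - u * (a - 1) by linear_combination h]
    exact ha.mul_left _

lemma br_central (hσ : Kills σ q) {a b : ℤ} (hg : Good q a b) (g) : br σ q a b * σ g = σ g * br σ q a b := by
  obtain ⟨c, d, h, hc, hd⟩ := hg.ex
  rw [← br_eq hσ a b c d h hc hd]
  exact MA_central hσ a b c d h hg.1 hg.2.1 hc hd g

lemma br_MB (hσ : Kills σ q) (a b c d : ℤ) (h) (hg : Good q a b)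
    (hc : (q : ℤ) ∣ c) (hd : (q : ℤ) ∣ d - 1) : σ (MB a b c d h) = br σ q a b := by
  have := congrArg σ (MB_W a b c d h)
  rw [map_mul, map_mul, br_eq hσ a b c d h hc hd, ← br_central hσ hg] at this
  exact (mul_right_cancel this).symm

lemma br_neg (hσ : Kills σ q) {a b : ℤ} (hg : Good q a b) : br σ q a (-b) = br σ q a b := by
  obtain ⟨c, d, h, hc, hd⟩ := hg.ex
  have h' : a * d - (-b) * (-c) = 1 := by linarith
  have := congrArg σ (MD_W a b c d h h')
  rw [map_mul, map_mul, br_eq hσ a b c d h hc hd, ← br_central hσ hg,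
    br_eq hσ a (-b) (-c) d h' ((dvd_neg).mpr hc) hd] at this
  exact (mul_right_cancel this).symm

lemma br_left (hσ : Kills σ q) {a b : ℤ} (hg : Good q a b) (t : ℤ) :
    br σ q (a + t * b) b = br σ q a b := by
  obtain ⟨c, d, h, hc, hd⟩ := hg.ex
  have h' : (a + t * b) * (d - t * b) - b * (c + t * d - t * (a + t * b)) = 1 := by
    linear_combination h
  have := congrArg σ (MA_conj a b c d t h h')
  rw [map_mul, map_mul, br_eq hσ a b c d h hc hd, br_central hσ hg, br_eq hσ _ _ _ _ h'] at this
  · exact mul_left_cancel this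
  · rw [show c + t * d - t * (a + t * b) = c + t * (d - 1) - t * (a - 1) - t * t * b by ring]
    exact dvd_sub (dvd_sub (dvd_add hc (hd.mul_left _)) (hg.1.mul_left _)) (hg.2.1.mul_left _)
  · rw [show d - t * b - 1 = d - 1 - t * b by ring]
    exact dvd_sub hd (hg.2.1.mul_left _)

lemma br_right (hσ : Kills σ q) {a b : ℤ} (hg : Good q a b) (t : ℤ) :
    br σ q a (b + t * q * a) = br σ q a b := by
  obtain ⟨c, d, h, hc, hd⟩ := hg.ex
  have h' : a * (d + t * q * c) - (b + t * q * a) * c = 1 := by linear_combination h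
  have := congrArg σ (MA_right a b c d (t * q) h h')
  rw [map_mul, br_eq hσ a b c d h hc hd, hσ _ _ n01 _ (Dvd.intro_left _ rfl), mul_one, br_eq hσ _ _ _ _ h' hc] at this
  · exact this
  · rw [show d + t * q * c - 1 = d - 1 + t * q * c by ring]
    exact dvd_add hd (hc.mul_left _)

lemma br_one (hσ : Kills σ q) {b : ℤ} (hb : (q : ℤ) ∣ b) : br σ q 1 b = 1 := by
  rw [← br_eq hσ 1 b 0 1 (by ring) (dvd_zero _) (by simp), MA_unip, hσ _ _ _ _ hb]

lemma Good.mul {a₁ a₂ b : ℤ} (h₁ : Good q a₁ b) (h₂ : Good q a₂ b) : Good q (a₁ * a₂) b := by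
  refine ⟨?_, h₁.2.1, h₁.2.2.mul_left h₂.2.2⟩
  rw [show a₁ * a₂ - 1 = (a₁ - 1) * a₂ + (a₂ - 1) by ring]
  exact dvd_add (h₁.1.mul_right _) h₂.1

lemma br_mul (hσ : Kills σ q) {a₁ a₂ b : ℤ} (hg₁ : Good q a₁ b) (hg₂ : Good q a₂ b) :
    br σ q (a₁ * a₂) b = br σ q a₂ b * br σ q a₁ b := by
  obtain ⟨c₁, d₁, h₁, hc₁, hd₁⟩ := hg₁.ex
  obtain ⟨c₂, d₂, h₂, hc₂, hd₂⟩ := hg₂.ex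
  obtain ⟨c, d, h, hc, hd⟩ := (hg₁.mul hg₂).ex
  have := congrArg σ (MA_mult a₁ a₂ b c₁ d₁ c₂ d₂ c d h₁ h₂ h)
  simp only [map_mul] at this
  rw [br_MB hσ _ _ _ _ h₂ hg₂ hc₂ hd₂, br_MB hσ _ _ _ _ h (hg₁.mul hg₂) hc hd,
    br_eq hσ _ _ _ _ h₁ hc₁ hd₁, hσ _ _ n01.symm _ (hc₁.mul_right _),
    hσ _ _ n02.symm _ (dvd_sub ((hc₂.mul_right _).mul_right _) (hc.mul_left _)),
    hσ _ _ n12 _ ((dvd_sub_comm).mp hd₁), hσ _ _ n12 _ ((dvd_sub_comm).mp hg₁.1)] at this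
  have e : σ (SpecialLinearGroup.transvection n12.symm (-a₂)) =
      σ (SpecialLinearGroup.transvection n12.symm (-1)) := by
    rw [show -a₂ = -1 + (1 - a₂) by ring, transvection_add, map_mul,
      hσ _ _ n12.symm _ ((dvd_sub_comm).mp hg₂.1), mul_one]
  rw [e] at this
  simp only [one_mul, mul_one] at this
  rw [← br_central hσ (hg₁.mul hg₂)] at this
  exact (mul_right_cancel this).symm

lemma Good.one {b : ℤ} (hb : (q : ℤ) ∣ b) : Good q 1 b := ⟨by simp, hb, isCoprime_one_left⟩

lemma Good.pow {a b : ℤ} (h : Good q a b) (k : ℕ) : Good q (a ^ k) b := by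
  induction k with
  | zero => rw [pow_zero]; exact Good.one h.2.1
  | succ k ih => rw [pow_succ]; exact ih.mul h

lemma br_pow (hσ : Kills σ q) {a b : ℤ} (hg : Good q a b) (k : ℕ) :
    br σ q (a ^ k) b = br σ q a b ^ k := by
  induction k with
  | zero => rw [pow_zero, pow_zero, br_one hσ hg.2.1]
  | succ k ih => rw [pow_succ, br_mul hσ (hg.pow k) hg, ih, ← pow_succ']

end men
end DD

set_option linter.unusedSimpArgs false
open Matrix
namespace DD
open Matrix.SpecialLinearGroup

lemma prime_exists {m r : ℕ} (hm : m ≠ 0) (hr : r ≠ 0) (hmr : IsCoprime (m : ℤ) (r : ℤ)) {α β : ℤ}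
    (hα : IsCoprime α (m : ℤ)) (hβ : IsCoprime β (r : ℤ)) (N : ℕ) :
    ∃ p > N, p.Prime ∧ (m : ℤ) ∣ p - α ∧ (r : ℤ) ∣ p - β := by
  obtain ⟨u, v, h⟩ := hmr
  have e1 : α * (v * r) + β * (u * m) = α + (m : ℤ) * (u * (β - α)) := by
    linear_combination α * h
  have e2 : α * (v * r) + β * (u * m) = β + (r : ℤ) * (v * (α - β)) := by
    linear_combination β * h
  have hx : IsCoprime (α * (v * r) + β * (u * m)) ((m * r : ℕ) : ℤ) := by
    push_cast
    refine IsCoprime.mul_right ?_ ?_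
    · rw [e1]; exact IsCoprime.add_mul_left_left hα _
    · rw [e2]; exact IsCoprime.add_mul_left_left hβ _
  obtain ⟨p, hp, hpp, hmod⟩ := Nat.forall_exists_prime_gt_and_zmodEq N (mul_ne_zero hm hr) hx
  have hd := hmod.symm.dvd
  push_cast at hd
  refine ⟨p, hp, hpp, ?_, ?_⟩
  · have h1 := (Dvd.intro _ rfl : (m : ℤ) ∣ m * r).trans hd
    rw [e1] at h1
    have := dvd_add h1 (Dvd.intro _ rfl : (m : ℤ) ∣ m * (u * (β - α)))
    rwa [show (p : ℤ) - (α + m * (u * (β - α))) + m * (u * (β - α)) = p - α by ring] at this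
  · have h1 := (Dvd.intro_left _ rfl : (r : ℤ) ∣ m * r).trans hd
    rw [e2] at h1
    have := dvd_add h1 (Dvd.intro _ rfl : (r : ℤ) ∣ r * (v * (α - β)))
    rwa [show (p : ℤ) - (β + r * (v * (α - β))) + r * (v * (α - β)) = p - β by ring] at this

lemma eps_two {a b : ℤ} (hab : IsCoprime a b) (h4 : a.natAbs % 4 = 3) :
    ∃ ε : ℤ, (ε = 1 ∨ ε = -1) ∧ ∀ p : ℕ, p.Prime → p % 4 = 3 → (a.natAbs : ℤ) ∣ p - ε * b →
      jacobiSym a p = 1 := by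
  set m := a.natAbs with hm
  have hmo : Odd m := by rw [Nat.odd_iff]; omega
  have hg : b.gcd m = 1 := by
    have := Int.isCoprime_iff_gcd_eq_one.mp hab.symm
    rw [Int.gcd_eq_natAbs] at this ⊢
    rw [Int.natAbs_natCast]; exact this
  have hneg : jacobiSym (-b) m = - jacobiSym b m := by
    rw [jacobiSym.neg b hmo, ZMod.χ₄_nat_three_mod_four h4]; ring
  have key : ∀ s : ℤ, (s = 1 ∨ s = -1) → ∃ ε : ℤ, (ε = 1 ∨ ε = -1) ∧ jacobiSym (ε * b) m = s := by
    intro s hs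
    rcases jacobiSym.eq_one_or_neg_one hg with h | h <;> rcases hs with rfl | rfl
    · exact ⟨1, Or.inl rfl, by simpa using h⟩
    · exact ⟨-1, Or.inr rfl, by simp [hneg, h]⟩
    · exact ⟨-1, Or.inr rfl, by simp [hneg, h]⟩
    · exact ⟨1, Or.inl rfl, by simpa using h⟩
  have hp' : ∀ (ε : ℤ) (p : ℕ), (m : ℤ) ∣ p - ε * b → jacobiSym p m = jacobiSym (ε * b) m := by
    intro ε p h
    exact jacobiSym.mod_left' (Int.modEq_iff_dvd.mpr h).symm
  rcases Int.natAbs_eq a with ha | ha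
  · obtain ⟨ε, hε, hs⟩ := key (-1) (Or.inr rfl)
    refine ⟨ε, hε, fun p hp hp4 hd => ?_⟩
    rw [ha, ← hm, jacobiSym.quadratic_reciprocity_three_mod_four h4 hp4, hp' ε p hd, hs]; rfl
  · obtain ⟨ε, hε, hs⟩ := key 1 (Or.inl rfl)
    refine ⟨ε, hε, fun p hp hp4 hd => ?_⟩
    rw [ha, ← hm, jacobiSym.neg _ (by rw [Nat.odd_iff]; omega), ZMod.χ₄_nat_three_mod_four hp4,
      jacobiSym.quadratic_reciprocity_three_mod_four h4 hp4, hp' ε p hd, hs]; rfl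

variable {G : Type*} [Group G] {σ : SpecialLinearGroup (Fin 3) ℤ →* G} {q : ℕ}

lemma br_pow_one (hσ : Kills σ q) (hq : q ≠ 0) {a b : ℤ} (hg : Good q a (q * b)) {p : ℕ} (hp : p.Prime)
    (hpq : p > q) {ε : ℤ} (hε : ε = 1 ∨ ε = -1) (hd : (a.natAbs : ℤ) ∣ p - ε * b) {k : ℕ}
    (hk : (p : ℤ) ∣ a ^ k - 1) : br σ q a (q * b) ^ k = 1 := by
  rw [Int.natAbs_dvd] at hd
  obtain ⟨t, ht⟩ := hd
  have hcb : IsCoprime a b := hg.2.2.of_mul_right_right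
  have hcq : IsCoprime a (q : ℤ) := hg.2.2.of_mul_right_left
  have hε' : IsCoprime a (ε * b) := by
    rcases hε with rfl | rfl
    · simpa using hcb
    · rw [neg_one_mul]; exact hcb.neg_right
  have hgε : Good q a (q * (ε * b)) := ⟨hg.1, Dvd.intro _ rfl, hcq.mul_right hε'⟩
  have e1 : br σ q a (q * (ε * b)) = br σ q a (q * b) := by
    rcases hε with rfl | rfl
    · rw [one_mul]
    · rw [show (q : ℤ) * (-1 * b) = - (q * b) by ring, br_neg hσ hg]
  have e2 : br σ q a (q * p) = br σ q a (q * (ε * b)) := by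
    rw [← br_right hσ hgε t]
    congr 1
    linear_combination (q : ℤ) * ht
  have hcp : IsCoprime a (p : ℤ) := by
    rw [show (p : ℤ) = ε * b + a * t by linear_combination ht]
    exact IsCoprime.add_mul_left_right hε' _
  have hgp : Good q a (q * p) := ⟨hg.1, Dvd.intro _ rfl, hcq.mul_right hcp⟩
  rw [← e1, ← e2, ← br_pow hσ hgp]
  have hqk : (q : ℤ) ∣ a ^ k - 1 := (hgp.pow k).1
  have hqp : IsCoprime (q : ℤ) (p : ℤ) := by
    rw [Nat.isCoprime_iff_coprime]
    exact ((Nat.Prime.coprime_iff_not_dvd hp).mpr fun h => by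
      have := Nat.le_of_dvd (Nat.pos_of_ne_zero hq) h; omega).symm
  obtain ⟨s, hs⟩ := hqp.mul_dvd hqk hk
  rw [show a ^ k = 1 + s * (q * p) by linear_combination hs,
    br_left hσ (Good.one (Dvd.intro _ rfl)), br_one hσ (Dvd.intro _ rfl)]

lemma br_trivial_aux (hσ : Kills σ q) (hq : q ≠ 0) {a b : ℤ} (hg : Good q a (q * b))
    (h4 : a.natAbs % 4 = 3) : br σ q a (q * b) = 1 := by
  have hcb : IsCoprime a b := hg.2.2.of_mul_right_right
  have hm : a.natAbs ≠ 0 := by omega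
  have hεc : ∀ ε : ℤ, (ε = 1 ∨ ε = -1) → IsCoprime (ε * b) (a.natAbs : ℤ) := by
    intro ε hε
    have : IsCoprime (ε * b) a := by
      rcases hε with rfl | rfl
      · simpa using hcb.symm
      · rw [neg_one_mul]; exact hcb.symm.neg_left
    rcases Int.natAbs_eq a with ha | ha
    · rwa [ha] at this
    · rw [ha] at this
      exact (IsCoprime.neg_right_iff _ _).mp this
  have key : ∀ r : ℕ, r.Prime → ∃ k : ℕ, ¬ r ∣ k ∧ br σ q a (q * b) ^ k = 1 := by
    intro r hr
    rcases hr.eq_two_or_odd with rfl | hodd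
    · obtain ⟨ε, hε, H⟩ := eps_two hcb h4
      obtain ⟨p, hpq, hp, h1, h2⟩ := prime_exists hm (by norm_num : 4 ≠ 0) (by
          rw [Nat.isCoprime_iff_coprime]
          have : Nat.Coprime a.natAbs 2 := by
            rw [Nat.coprime_two_right, Nat.odd_iff]; omega
          exact Nat.Coprime.mul_right this this) (hεc ε hε) (β := 3) (by
          exact ⟨-1, 1, by norm_num⟩) q
      have hp4 : p % 4 = 3 := by push_cast at h2; omega
      have hJ := H p hp hp4 h1
      refine ⟨p / 2, by omega, br_pow_one hσ hq hg hp hpq hε h1 ?_⟩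
      have : Fact p.Prime := ⟨hp⟩
      rw [← jacobiSym.legendreSym.to_jacobiSym] at hJ
      have := legendreSym.eq_pow p a
      rw [hJ] at this
      rw [← ZMod.intCast_zmod_eq_zero_iff_dvd]
      push_cast at this ⊢
      rw [← this]; ring
    · have : ∃ p > q, p.Prime ∧ ¬ r ∣ p - 1 ∧ ∃ ε : ℤ, (ε = 1 ∨ ε = -1) ∧
          (a.natAbs : ℤ) ∣ p - ε * b := by
        have hrz : Prime (r : ℤ) := Nat.prime_iff_prime_int.mp hr
        have hr3 : 3 ≤ r := by have := hr.two_le; omega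
        by_cases hra : (r : ℤ) ∣ a
        · have : ∃ ε : ℤ, (ε = 1 ∨ ε = -1) ∧ ¬ (r : ℤ) ∣ ε * b - 1 := by
            by_contra hcon
            push Not at hcon
            have h1 := hcon 1 (Or.inl rfl)
            have h2 := hcon (-1) (Or.inr rfl)
            have h3 := dvd_add h1 h2
            rw [show (1 * b - 1 + (-1 * b - 1) : ℤ) = -2 by ring, dvd_neg] at h3
            have := Int.le_of_dvd (by norm_num) h3
            omega
          obtain ⟨ε, hε, hn⟩ := this
          obtain ⟨p, hpq, hp, h1, -⟩ := prime_exists hm one_ne_zero (by rw [Nat.cast_one]; exact isCoprime_one_right) (hεc ε hε) (β := 0)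
            (by rw [Nat.cast_one]; exact isCoprime_one_right) q
          refine ⟨p, hpq, hp, ?_, ε, hε, h1⟩
          intro hd
          apply hn
          have h1' : (r : ℤ) ∣ p - ε * b := hra.trans (Int.natAbs_dvd.mp h1)
          have h2 : (r : ℤ) ∣ (p : ℤ) - 1 := by
            have := Int.natCast_dvd_natCast.mpr hd
            rwa [Nat.cast_sub hp.one_le, Nat.cast_one] at this
          have := dvd_sub h2 h1'
          rwa [show (p - 1 - (p - ε * b) : ℤ) = ε * b - 1 by ring] at this
        · obtain ⟨p, hpq, hp, h1, h2⟩ := prime_exists hm hr.ne_zero (by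
              rw [Nat.isCoprime_iff_coprime]
              refine Nat.Coprime.symm ((Nat.Prime.coprime_iff_not_dvd hr).mpr ?_)
              rwa [← Int.natCast_dvd]) (hεc 1 (Or.inl rfl)) (β := 2) (by
              rw [show (2 : ℤ) = ((2 : ℕ) : ℤ) by rfl, Nat.isCoprime_iff_coprime,
                Nat.coprime_two_left, Nat.odd_iff]; exact hodd) q
          refine ⟨p, hpq, hp, ?_, 1, Or.inl rfl, h1⟩
          intro hd
          have h3 : (r : ℤ) ∣ (p : ℤ) - 1 := by
            have := Int.natCast_dvd_natCast.mpr hd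
            rwa [Nat.cast_sub hp.one_le, Nat.cast_one] at this
          have := dvd_sub h3 h2
          rw [show (p - 1 - (p - 2) : ℤ) = 1 by ring] at this
          exact hrz.not_dvd_one this
      obtain ⟨p, hpq, hp, hn, ε, hε, hd⟩ := this
      refine ⟨p - 1, hn, br_pow_one hσ hq hg hp hpq hε hd ?_⟩
      have hpa : IsCoprime a (p : ℤ) := by
        obtain ⟨t, ht⟩ := Int.natAbs_dvd.mp hd
        rw [show (p : ℤ) = ε * b + a * t by linear_combination ht]
        refine IsCoprime.add_mul_left_right ?_ _
        rcases hε with rfl | rfl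
        · simpa using hcb
        · rw [neg_one_mul]; exact hcb.neg_right
      exact (Int.ModEq.pow_card_sub_one_eq_one hp hpa).symm.dvd
  by_contra hne
  have ho : orderOf (br σ q a (q * b)) ≠ 1 := by rwa [Ne, orderOf_eq_one_iff]
  obtain ⟨r, hr, hrd⟩ := Nat.exists_prime_and_dvd ho
  obtain ⟨k, hk, e⟩ := key r hr
  exact hk (hrd.trans (orderOf_dvd_of_pow_eq_one e))

lemma Good.left {a b : ℤ} (hg : Good q a b) (t : ℤ) : Good q (a + t * b) b := by
  refine ⟨?_, hg.2.1, IsCoprime.add_mul_right_left hg.2.2 t⟩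
  rw [show a + t * b - 1 = a - 1 + t * b by ring]
  exact dvd_add hg.1 (hg.2.1.mul_left _)

lemma br_trivial (hσ : Kills σ q) (hq : q ≠ 0) {a b : ℤ} (hg : Good q a b) : br σ q a b = 1 := by
  have S3 : ∀ a b : ℤ, Good q a b → a.natAbs % 4 = 3 → br σ q a b = 1 := by
    intro a b hg h
    obtain ⟨b', rfl⟩ := hg.2.1
    exact br_trivial_aux hσ hq hg h
  have S2 : ∀ a b : ℤ, Good q a b → b ≠ 0 → a % 2 = 1 → br σ q a b = 1 := by
    intro a b hg hb h
    have hb1 : 1 ≤ |b| := Int.one_le_abs hb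
    by_cases h3 : a % 4 = 3
    · have hpos : 0 ≤ a + (4 * b * |a|) * b := by
        have : |a| * 1 ≤ |a| * (b * b) := by
          apply mul_le_mul_of_nonneg_left _ (abs_nonneg a)
          rw [← abs_mul_abs_self b]; nlinarith
        have := neg_abs_le a
        nlinarith [abs_nonneg a]
      rw [← br_left hσ hg (4 * b * |a|)]
      apply S3 _ _ (hg.left _)
      have : (a + (4 * b * |a|) * b) % 4 = 3 := by
        rw [show a + (4 * b * |a|) * b = a + 4 * (b * |a| * b) by ring]; omega
      omega
    · have hpos : a + (-4 * b * |a|) * b ≤ 0 := by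
        have : |a| * 1 ≤ |a| * (b * b) := by
          apply mul_le_mul_of_nonneg_left _ (abs_nonneg a)
          rw [← abs_mul_abs_self b]; nlinarith
        have := le_abs_self a
        nlinarith [abs_nonneg a]
      rw [← br_left hσ hg (-4 * b * |a|)]
      apply S3 _ _ (hg.left _)
      have : (a + (-4 * b * |a|) * b) % 4 = 1 := by
        rw [show a + (-4 * b * |a|) * b = a + 4 * (- b * |a| * b) by ring]; omega
      omega
  have S1 : ∀ a b : ℤ, Good q a b → b ≠ 0 → br σ q a b = 1 := by
    intro a b hg hb
    by_cases h : a % 2 = 1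
    · exact S2 a b hg hb h
    · have hbo : b % 2 = 1 := by
        by_contra hb2
        obtain ⟨u, v, e⟩ := hg.2.2
        have h1 : (2 : ℤ) ∣ a := by omega
        have h2 : (2 : ℤ) ∣ b := by omega
        have := dvd_add (h1.mul_left u) (h2.mul_left v)
        rw [e] at this; omega
      rw [← br_left hσ hg 1]
      exact S2 _ _ (hg.left _) hb (by omega)
  by_cases hb : b = 0
  · subst hb
    have ha : a ≠ 0 := by
      rintro rfl
      have := hg.2.2
      simp [isCoprime_zero_left] at this
    rw [← br_right hσ hg 1]
    refine S1 _ _ ⟨hg.1, ?_, ?_⟩ ?_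
    · exact ⟨a, by ring⟩
    · rw [show (0 : ℤ) + 1 * q * a = 0 + q * a by ring]
      exact IsCoprime.add_mul_right_right hg.2.2 _
    · simp [ha, hq]
  · exact S1 a b hg hb

/-- congruence subgroup property, normal form -/
theorem csp {q : ℕ} (hq : q ≠ 0) (m : ℕ) :
    ∀ K : Subgroup (SpecialLinearGroup (Fin (m+3)) ℤ), K.Normal →
      (∀ (i j : Fin (m+3)) (hij : i ≠ j) (t : ℤ), (q : ℤ) ∣ t →
      SpecialLinearGroup.transvection hij t ∈ K) → Gam (Fin (m+3)) q ≤ K := by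
  refine csp_of_base hq ?_ m
  intro K hN hK g hg
  obtain ⟨k₁, hk₁, k₂, hk₂, B, hB, e⟩ := red_step (m := 0) hq hK (by
      intro i j hij k hk
      have := hN.conj_mem k hk (SpecialLinearGroup.transvection hij (-1))
      rwa [transvection_inv, neg_neg] at this) g hg
  have hσ : Kills (QuotientGroup.mk' K) q := by
    intro i j hij t ht
    rw [QuotientGroup.mk'_apply, QuotientGroup.eq_one_iff]
    exact hK i j hij t ht
  have hdet : B.1 0 0 * B.1 1 1 - B.1 0 1 * B.1 1 0 = 1 := by
    have := B.2
    rwa [Matrix.det_fin_two] at this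
  have hBM : emb 2 B = MA (B.1 0 0) (B.1 0 1) (B.1 1 0) (B.1 1 1) hdet := by
    apply Subtype.ext
    rw [emb_coe, MA_coe]
    ext i j
    refine Fin.lastCases ?_ (fun i => ?_) i <;> refine Fin.lastCases ?_ (fun j => ?_) j
    · rw [embM_ll]; rfl
    · rw [embM_lc]; fin_cases j <;> rfl
    · rw [embM_cl]; fin_cases i <;> rfl
    · rw [embM_cc]; fin_cases i <;> fin_cases j <;> rfl
  have h00 := mem_Gam.mp hB 0 0
  have h01 := mem_Gam.mp hB 0 1
  have h10 := mem_Gam.mp hB 1 0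
  have h11 := mem_Gam.mp hB 1 1
  simp only [Matrix.one_apply_eq] at h00 h11
  rw [Matrix.one_apply_ne (by decide), sub_zero] at h01 h10
  have hgood : Good q (B.1 0 0) (B.1 0 1) := ⟨h00, h01, B.1 1 1, - B.1 1 0, by linear_combination hdet⟩
  have hB' : emb 2 B ∈ K := by
    rw [← QuotientGroup.eq_one_iff, ← QuotientGroup.mk'_apply, hBM, br_eq hσ _ _ _ _ hdet h10 h11]
    exact br_trivial hσ hq hgood
  have hB2 : emb (0+2) B ∈ K := hB'
  rw [← e] at hB2
  rwa [K.mul_mem_cancel_right hk₂, K.mul_mem_cancel_left hk₁] at hB2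

end DD

set_option linter.unusedSimpArgs false
set_option linter.unusedSectionVars false
open Matrix
namespace DD

section theta
variable {ι : Type*} [DecidableEq ι] [Fintype ι] {L : Type*} [LieRing L] [LieAlgebra ℂ L]
  {X : ι → ι → L}

lemma lie_swap {x y z : L} (h : ⁅x, y⁆ = z) : ⁅y, x⁆ = -z := by rw [← lie_skew, h]

lemma HX (hthird : ∀ i j : ι, ∃ k, k ≠ i ∧ k ≠ j)
    (R1 : ∀ i j k, i ≠ j → j ≠ k → i ≠ k → ⁅X i j, X j k⁆ = X i k)
    (R2 : ∀ i j k l, i ≠ j → k ≠ l → i ≠ l → j ≠ k → ⁅X i j, X k l⁆ = 0)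
    (k m i j : ι) (hij : i ≠ j) :
    ⁅⁅X k m, X m k⁆, X i j⁆ = (((if k = i then 1 else 0) - (if k = j then 1 else 0)
      - (if m = i then 1 else 0) + (if m = j then 1 else 0) : ℂ)) • X i j := by
  by_cases hkm : k = m
  · subst hkm
    simp
  have c1 : ∀ k m j, k ≠ m → k ≠ j → m ≠ j → ⁅⁅X k m, X m k⁆, X k j⁆ = X k j := by
    intro k m j hkm hkj hmj
    rw [lie_lie, R1 m k j hkm.symm hkj hmj, R1 k m j hkm hmj hkj,
      R2 k m k j hkm hkj hkj hkm.symm, lie_zero, sub_zero]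
  have c3 : ∀ k m i, k ≠ m → k ≠ i → m ≠ i → ⁅⁅X k m, X m k⁆, X i k⁆ = - X i k := by
    intro k m i hkm hki hmi
    rw [lie_lie, R2 m k i k hkm.symm hki.symm hkm.symm hki,
      lie_swap (R1 i k m hki.symm hkm hmi.symm), lie_zero, zero_sub, lie_neg, neg_neg,
      lie_swap (R1 i m k hmi.symm hkm.symm hki.symm)]
  have sk : ∀ k m, ⁅X k m, X m k⁆ = - ⁅X m k, X k m⁆ := fun k m => (lie_skew _ _).symm
  have c2 : ∀ k m j, k ≠ m → k ≠ j → m ≠ j → ⁅⁅X k m, X m k⁆, X m j⁆ = - X m j := by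
    intro k m j hkm hkj hmj
    rw [sk, neg_lie, c1 m k j hkm.symm hmj hkj]
  have c4 : ∀ k m i, k ≠ m → k ≠ i → m ≠ i → ⁅⁅X k m, X m k⁆, X i m⁆ = X i m := by
    intro k m i hkm hkj hmj
    rw [sk, neg_lie, c3 m k i hkm.symm hmj hkj, neg_neg]
  have c5 : ∀ k m, k ≠ m → ⁅⁅X k m, X m k⁆, X k m⁆ = (2 : ℂ) • X k m := by
    intro k m hkm
    obtain ⟨p, hpk, hpm⟩ := hthird k m
    rw [← R1 k p m hpk.symm hpm hkm]
    rw [R1 k p m hpk.symm hpm hkm, ← R1 k p m hpk.symm hpm hkm, leibniz_lie,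
      R1 k p m hpk.symm hpm hkm, c1 k m p hkm hpk.symm hpm.symm, c4 k m p hkm hpk.symm hpm.symm,
      R1 k p m hpk.symm hpm hkm, two_smul]
  by_cases h1 : k = i
  · subst h1
    by_cases h2 : m = j
    · subst h2
      rw [c5 k m hkm]
      congr 1
      simp [hij, hkm, Ne.symm hkm]; norm_num
    · rw [c1 k m j hkm hij h2]
      simp [hij, hkm, Ne.symm hkm, h2]
  by_cases h2 : m = i
  · subst h2
    by_cases h3 : k = j
    · subst h3
      rw [sk, neg_lie, c5 m k (Ne.symm hkm), ← neg_smul]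
      congr 1
      simp [hij, hkm, Ne.symm hkm]; norm_num
    · rw [c2 k m j hkm h3 hij]
      simp [hij, hkm, Ne.symm hkm, h3]
  by_cases h3 : k = j
  · subst h3
    rw [c3 k m i hkm h1 h2]
    simp [hij, hkm, Ne.symm hkm, h1, h2]
  by_cases h4 : m = j
  · subst h4
    rw [c4 k m i hkm h1 h2]
    simp [hij, hkm, Ne.symm hkm, h1, h2]
  rw [lie_lie, R2 m k i j (Ne.symm hkm) hij h4 h1, R2 k m i j hkm hij h3 h2]
  simp [h1, h2, h3, h4]

lemma Hcoc
    (R1 : ∀ i j k, i ≠ j → j ≠ k → i ≠ k → ⁅X i j, X j k⁆ = X i k) (i j k : ι) (hij : i ≠ j) :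
    ⁅X i k, X k i⁆ - ⁅X j k, X k j⁆ = ⁅X i j, X j i⁆ := by
  by_cases hik : i = k
  · subst hik
    rw [lie_self, zero_sub, lie_skew]
  by_cases hjk : j = k
  · subst hjk
    rw [lie_self, sub_zero]
  conv_rhs => rw [← R1 i k j hik (Ne.symm hjk) hij]
  rw [lie_lie, R1 k j i (Ne.symm hjk) hij.symm (Ne.symm hik),
    lie_swap (R1 j i k hij.symm hik hjk), lie_neg, sub_neg_eq_add, sub_eq_add_neg, lie_skew]

theorem exists_theta (hthird : ∀ i j : ι, ∃ k, k ≠ i ∧ k ≠ j) [Nonempty ι]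
    (R1 : ∀ i j k, i ≠ j → j ≠ k → i ≠ k → ⁅X i j, X j k⁆ = X i k)
    (R2 : ∀ i j k l, i ≠ j → k ≠ l → i ≠ l → j ≠ k → ⁅X i j, X k l⁆ = 0) :
    ∃ θ : Matrix ι ι ℂ →ₗ[ℂ] L, (∀ i j, i ≠ j → θ (Matrix.single i j 1) = X i j) ∧
      ∀ i j M, i ≠ j → θ (Matrix.single i j 1 * M - M * Matrix.single i j 1) = ⁅X i j, θ M⁆ := by
  let H : ι → L := fun k => ((Fintype.card ι : ℂ)⁻¹) • ∑ m, ⁅X k m, X m k⁆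
  have hn : (Fintype.card ι : ℂ) ≠ 0 := by simp
  have hH : ∀ i j, i ≠ j → H i - H j = ⁅X i j, X j i⁆ := by
    intro i j hij
    simp only [H]
    rw [← smul_sub, ← Finset.sum_sub_distrib, Finset.sum_congr rfl (fun m _ => Hcoc R1 i j m hij)]
    simp only [Finset.sum_const, Finset.card_univ, ← Nat.cast_smul_eq_nsmul ℂ]
    rw [smul_smul, inv_mul_cancel₀ hn, one_smul]
  have hHX : ∀ i j k, i ≠ j → ⁅X i j, H k⁆ =
      ((if k = j then 1 else 0) - (if k = i then 1 else 0) : ℂ) • X i j := by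
    intro i j k hij
    rw [← lie_skew]
    simp only [H]
    rw [smul_lie, _root_.sum_lie]
    rw [Finset.sum_congr rfl (fun m _ => HX hthird R1 R2 k m i j hij), ← Finset.sum_smul, smul_smul,
      ← neg_smul]
    congr 1
    simp only [Finset.sum_add_distrib, Finset.sum_sub_distrib, Finset.sum_const, Finset.card_univ,
      Finset.sum_ite_eq', Finset.mem_univ, if_true, nsmul_eq_mul]
    field_simp
    ring
  let T : ι → ι → L := fun k l => if k = l then H k else X k l
  let θ : Matrix ι ι ℂ →ₗ[ℂ] L :=
    { toFun := fun M => ∑ k, ∑ l, M k l • T k l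
      map_add' := by intro M M'; simp [add_smul, Finset.sum_add_distrib]
      map_smul' := by intro c M; simp [mul_smul, Finset.smul_sum] }
  have hθ : ∀ k l (c : ℂ), θ (Matrix.single k l c) = c • T k l := by
    intro k l c
    change ∑ a, ∑ b, (Matrix.single k l c) a b • T a b = _
    rw [Finset.sum_eq_single k]
    · rw [Finset.sum_eq_single l]
      · simp
      · intro b _ hb; simp [Matrix.single_apply, hb.symm]
      · simp
    · intro a _ ha
      refine Finset.sum_eq_zero fun b _ => ?_
      simp [Matrix.single_apply, ha.symm]
    · simp
  refine ⟨θ, fun i j hij => by rw [hθ, one_smul]; simp [T, hij], ?_⟩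
  intro i j M hij
  induction M using Matrix.induction_on' with
  | h_zero => simp
  | h_add p q hp hq =>
    rw [map_add, lie_add, ← hp, ← hq, ← map_add]
    congr 1
    noncomm_ring
  | h_std_basis k l c =>
    rw [hθ, lie_smul, map_sub]
    have e1 : θ (Matrix.single i j 1 * Matrix.single k l c) = c • (if j = k then T i l else 0) := by
      by_cases h : j = k
      · subst h; rw [Matrix.single_mul_single_same, hθ]; simp
      · rw [Matrix.single_mul_single_of_ne _ _ _ _ h]; simp [h]
    have e2 : θ (Matrix.single k l c * Matrix.single i j 1) = c • (if l = i then T k j else 0) := by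
      by_cases h : l = i
      · subst h; rw [Matrix.single_mul_single_same, hθ]; simp
      · rw [Matrix.single_mul_single_of_ne _ _ _ _ h]; simp [h]
    rw [e1, e2, ← smul_sub]
    congr 1
    by_cases hkl : k = l
    · subst hkl
      simp only [T, if_true]
      rw [hHX i j k hij]
      by_cases h1 : k = j
      · subst h1
        simp [hij, hij.symm]
      · by_cases h2 : k = i
        · subst h2; simp [hij, hij.symm]
        · simp [h1, h2, Ne.symm h1]
    · have hT : T k l = X k l := by simp [T, hkl]
      rw [hT]
      by_cases h1 : j = k
      · subst h1
        by_cases h2 : l = i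
        · subst h2
          simp only [T, if_true]
          exact hH _ _ hij
        · simp only [if_true, h2, if_false, sub_zero]
          rw [R1 i j l hij hkl (Ne.symm h2)]
          simp [T, Ne.symm h2]
      · by_cases h2 : l = i
        · subst h2
          simp only [if_true, h1, if_false, zero_sub]
          rw [lie_swap (R1 k l j hkl hij (Ne.symm h1))]
          simp [T, Ne.symm h1]
        · simp only [h1, h2, if_false, sub_zero]
          rw [R2 i j k l hij hkl (Ne.symm h2) h1]

end theta
end DD

set_option linter.unusedSimpArgs false
set_option linter.unusedSectionVars false
open Matrix
namespace DD
open Matrix.SpecialLinearGroup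

section flow
variable {κ : Type*} [DecidableEq κ] [Fintype κ]

def IsPoly (f : ℂ → Matrix κ κ ℂ) : Prop :=
  ∃ P : Matrix κ κ (Polynomial ℂ), ∀ t, f t = (Polynomial.evalRingHom t).mapMatrix P

lemma IsPoly.mul {f g : ℂ → Matrix κ κ ℂ} (hf : IsPoly f) (hg : IsPoly g) :
    IsPoly (fun t => f t * g t) := by
  obtain ⟨P, hP⟩ := hf
  obtain ⟨Q, hQ⟩ := hg
  exact ⟨P * Q, fun t => by beta_reduce; rw [hP, hQ, map_mul]⟩

lemma IsPoly.congr {f g : ℂ → Matrix κ κ ℂ} (hf : IsPoly f) (h : ∀ t, f t = g t) : IsPoly g := by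
  have : f = g := funext h
  rwa [← this]

lemma IsPoly.const (A : Matrix κ κ ℂ) : IsPoly (fun _ => A) :=
  ⟨A.map Polynomial.C, fun t => by ext a b; simp⟩

lemma IsPoly.comp {f : ℂ → Matrix κ κ ℂ} (hf : IsPoly f) (q : Polynomial ℂ) :
    IsPoly (fun t => f (q.eval t)) := by
  obtain ⟨P, hP⟩ := hf
  exact ⟨P.map (fun p => p.comp q), fun t => by beta_reduce; rw [hP]; ext a b; simp⟩

lemma IsPoly.eq {f g : ℂ → Matrix κ κ ℂ} (hf : IsPoly f) (hg : IsPoly g) {l : ℂ} (hl : l ≠ 0)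
    (h : ∀ k : ℕ, f (l * k) = g (l * k)) (t : ℂ) : f t = g t := by
  obtain ⟨P, hP⟩ := hf
  obtain ⟨Q, hQ⟩ := hg
  have : P = Q := by
    ext1 a b
    apply Polynomial.eq_of_infinite_eval_eq
    refine (Set.infinite_range_of_injective (f := fun k : ℕ => l * (k : ℂ)) ?_).mono ?_
    · intro a b hab
      simpa [hl] using hab
    · rintro _ ⟨k, rfl⟩
      have := h k
      rw [hP, hQ] at this
      simpa using congrFun (congrFun this a) b
  rw [hP, hQ, this]

lemma exists_flow (u : Matrix κ κ ℂ) (hu : IsNilpotent (u - 1)) {l : ℂ} (hl : l ≠ 0) :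
    ∃ x : ℂ → Matrix κ κ ℂ, IsPoly x ∧ ∀ k : ℕ, x (l * k) = u ^ k := by
  obtain ⟨M, hM⟩ := hu
  refine ⟨fun t => ∑ m ∈ Finset.range M,
    ((descPochhammer ℂ m).eval (t / l) / (m.factorial : ℂ)) • (u - 1) ^ m, ?_, ?_⟩
  · refine ⟨∑ m ∈ Finset.range M,
      (Polynomial.C ((m.factorial : ℂ)⁻¹) * (descPochhammer ℂ m).comp
        (Polynomial.C l⁻¹ * Polynomial.X)) • ((u - 1) ^ m).map Polynomial.C, fun t => ?_⟩
    ext a b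
    simp [Matrix.sum_apply, Polynomial.eval_finsetSum]
    refine Finset.sum_congr rfl fun m _ => ?_
    rw [show l⁻¹ * t = t / l by ring]
    ring
  · intro k
    have e : (u : Matrix κ κ ℂ) = (u - 1) + 1 := by abel
    conv_rhs => rw [e, (Commute.one_right (u - 1)).add_pow]
    have h1 : ∀ m, (descPochhammer ℂ m).eval (l * k / l) / (m.factorial : ℂ) = (k.choose m : ℂ) := by
      intro m
      rw [mul_div_cancel_left₀ _ hl, descPochhammer_eval_eq_descFactorial,
        Nat.descFactorial_eq_factorial_mul_choose]
      push_cast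
      field_simp [Nat.factorial_ne_zero]
    simp only [h1, one_pow, mul_one]
    have h2 : ∀ m, (u - 1) ^ m * ((k.choose m : ℕ) : Matrix κ κ ℂ)
        = (k.choose m : ℂ) • (u - 1) ^ m := by
      intro m
      rw [← nsmul_eq_mul', Nat.cast_smul_eq_nsmul]
    simp only [h2]
    have z1 : ∀ m, M ≤ m → (u - 1) ^ m = 0 := fun m hm => pow_eq_zero_of_le hm hM
    have A : ∀ p, M ≤ p → ∑ m ∈ Finset.range M, (k.choose m : ℂ) • (u - 1) ^ m =
        ∑ m ∈ Finset.range p, (k.choose m : ℂ) • (u - 1) ^ m := by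
      intro p hp
      refine Finset.sum_subset (Finset.range_mono hp) fun m _ hm => ?_
      rw [z1 m (by simpa using hm), smul_zero]
    have B : ∀ p, k + 1 ≤ p → ∑ m ∈ Finset.range (k+1), (k.choose m : ℂ) • (u - 1) ^ m =
        ∑ m ∈ Finset.range p, (k.choose m : ℂ) • (u - 1) ^ m := by
      intro p hp
      refine Finset.sum_subset (Finset.range_mono hp) fun m _ hm => ?_
      rw [Nat.choose_eq_zero_of_lt (by simp at hm; omega)]; simp
    rw [A (M + k + 1) (by omega), B (M + k + 1) (by omega)]

structure FlowSys {ι : Type*} (x : ι → ι → ℂ → Matrix κ κ ℂ) : Prop where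
  poly : ∀ i j, i ≠ j → IsPoly (x i j)
  add : ∀ i j, i ≠ j → ∀ s t, x i j (s + t) = x i j s * x i j t
  zero : ∀ i j, i ≠ j → x i j 0 = 1
  comm : ∀ i j k l, i ≠ j → k ≠ l → i ≠ l → j ≠ k → ∀ s t, x i j s * x k l t = x k l t * x i j s
  rel : ∀ i j k, i ≠ j → j ≠ k → i ≠ k → ∀ s t,
    x i j s * x j k t = x i k (s * t) * x j k t * x i j s

lemma FlowSys.inv {ι : Type*} {x : ι → ι → ℂ → Matrix κ κ ℂ} (h : FlowSys x) {i j : ι}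
    (hij : i ≠ j) (t : ℂ) : x i j t * x i j (-t) = 1 := by
  rw [← h.add i j hij, add_neg_cancel, h.zero i j hij]

lemma FlowSys.inv' {ι : Type*} {x : ι → ι → ℂ → Matrix κ κ ℂ} (h : FlowSys x) {i j : ι}
    (hij : i ≠ j) (t : ℂ) : x i j (-t) * x i j t = 1 := by
  rw [← h.add i j hij, neg_add_cancel, h.zero i j hij]

theorem exists_flowSys {ι : Type*} [DecidableEq ι] [Fintype ι]
    (ρ : SpecialLinearGroup ι ℤ →* GL κ ℂ) (l : ℕ) (hl : l ≠ 0)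
    (hu : ∀ i j (hij : i ≠ j), IsNilpotent
      (((ρ (SpecialLinearGroup.transvection hij (l : ℤ)) : GL κ ℂ) : Matrix κ κ ℂ) - 1)) :
    ∃ x : ι → ι → ℂ → Matrix κ κ ℂ, FlowSys x ∧
      ∀ i j (hij : i ≠ j) (t : ℤ), x i j (l * t) =
        (ρ (SpecialLinearGroup.transvection hij (l * t)) : Matrix κ κ ℂ) := by
  have hlC : (l : ℂ) ≠ 0 := by exact_mod_cast hl
  have h0 : ∀ i j : ι, ∃ f : ℂ → Matrix κ κ ℂ, i ≠ j → IsPoly f ∧ ∀ hij : i ≠ j, ∀ k : ℕ,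
      f (l * k) = (ρ (SpecialLinearGroup.transvection hij (l * (k : ℤ))) : Matrix κ κ ℂ) := by
    intro i j
    by_cases hij : i = j
    · exact ⟨0, fun h => absurd hij h⟩
    · obtain ⟨x, hx, hx'⟩ := exists_flow _ (hu i j hij) hlC
      refine ⟨x, fun _ => ⟨hx, fun hij k => ?_⟩⟩
      rw [hx', mul_comm (l : ℤ), ← tv_pow, map_pow, Units.val_pow_eq_pow_val]
  choose x hx using h0
  have hp : ∀ i j, i ≠ j → IsPoly (x i j) := fun i j hij => (hx i j hij).1
  have hv : ∀ i j (hij : i ≠ j) (k : ℕ), x i j (l * k) =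
    (ρ (SpecialLinearGroup.transvection hij (l * (k : ℤ))) : Matrix κ κ ℂ) :=
    fun i j hij => (hx i j hij).2 hij
  have lin : ∀ i j, i ≠ j → ∀ c : ℂ, IsPoly (fun s => x i j (c * s)) := by
    intro i j hij c
    exact ((hp i j hij).comp (Polynomial.C c * Polynomial.X)).congr (fun t => by simp)
  have lin2 : ∀ i j, i ≠ j → ∀ c : ℂ, IsPoly (fun s => x i j (s * c)) := by
    intro i j hij c
    exact ((hp i j hij).comp (Polynomial.X * Polynomial.C c)).congr (fun t => by rw [Polynomial.eval_mul, Polynomial.eval_C, Polynomial.eval_X])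
  have sh : ∀ i j, i ≠ j → ∀ c : ℂ, IsPoly (fun s => x i j (c + s)) := by
    intro i j hij c
    exact ((hp i j hij).comp (Polynomial.C c + Polynomial.X)).congr (fun t => by simp)
  have sh2 : ∀ i j, i ≠ j → ∀ c : ℂ, IsPoly (fun s => x i j (s + c)) := by
    intro i j hij c
    exact ((hp i j hij).comp (Polynomial.X + Polynomial.C c)).congr (fun t => by simp)
  have F : FlowSys x := by
    refine ⟨hp, ?_, ?_, ?_, ?_⟩
    · intro i j hij s
      refine IsPoly.eq (sh i j hij s) ((IsPoly.const _).mul (hp i j hij)) hlC fun b => ?_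
      revert s
      refine IsPoly.eq (sh2 i j hij _) ((hp i j hij).mul (IsPoly.const _)) hlC fun a => ?_
      rw [hv i j hij, hv i j hij, ← Units.val_mul, ← map_mul, ← transvection_add, ← mul_add,
        ← mul_add]
      have := hv i j hij (a + b)
      push_cast at this
      exact this
    · intro i j hij
      simpa using hv i j hij 0
    · intro i j k m hij hkm him hjk s
      refine IsPoly.eq ((IsPoly.const _).mul (hp k m hkm)) ((hp k m hkm).mul (IsPoly.const _))
        hlC fun b => ?_
      revert s
      refine IsPoly.eq ((hp i j hij).mul (IsPoly.const _)) ((IsPoly.const _).mul (hp i j hij))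
        hlC fun a => ?_
      rw [hv i j hij, hv k m hkm, ← Units.val_mul, ← Units.val_mul, ← map_mul, ← map_mul,
        tv_comm hij hkm him hjk]
    · intro i j k hij hjk hik s
      refine IsPoly.eq ((IsPoly.const _).mul (hp j k hjk))
        (((lin i k hik _).mul (hp j k hjk)).mul (IsPoly.const _)) hlC fun b => ?_
      revert s
      refine IsPoly.eq ((hp i j hij).mul (IsPoly.const _))
        (((lin2 i k hik _).mul (IsPoly.const _)).mul (hp i j hij)) hlC fun a => ?_
      have := hv i k hik (a * (l * b))
      rw [show (l : ℂ) * ((a * (l * b) : ℕ) : ℂ) = l * a * (l * b) by push_cast; ring] at this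
      rw [hv i j hij, hv j k hjk, this, ← Units.val_mul, ← Units.val_mul, ← Units.val_mul,
        ← map_mul, ← map_mul, ← map_mul, tv_rel hij hjk hik]
      congr 5
      push_cast; ring_nf
  refine ⟨x, F, fun i j hij t => ?_⟩
  obtain ⟨k, rfl | rfl⟩ := t.eq_nat_or_neg
  · simpa using hv i j hij k
  · have h1 := F.inv hij (l * k)
    rw [hv i j hij] at h1
    have h2 : (ρ (SpecialLinearGroup.transvection hij (l * (k : ℤ))) : Matrix κ κ ℂ) *
       (ρ (SpecialLinearGroup.transvection hij (l * -(k : ℤ))) : Matrix κ κ ℂ) = 1 := by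
      rw [← Units.val_mul, ← map_mul, ← transvection_add]
      simp
    have := (ρ (SpecialLinearGroup.transvection hij (l * (k : ℤ)))).isUnit.mul_left_cancel
      (h1.trans h2.symm)
    simpa using this

end flow
end DD

set_option linter.unusedSimpArgs false
set_option linter.unusedSectionVars false
open Matrix
namespace DD
open Matrix.SpecialLinearGroup

section HD
variable {κ : Type*} [DecidableEq κ] [Fintype κ]

def HD (F : ℂ → Matrix κ κ ℂ) (F' : Matrix κ κ ℂ) (s : ℂ) : Prop :=
  ∀ a b, HasDerivAt (fun s => F s a b) (F' a b) s

lemma HD.cst (A : Matrix κ κ ℂ) (s : ℂ) : HD (fun _ => A) 0 s := fun _ _ => hasDerivAt_const _ _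

lemma HD.mul {F G : ℂ → Matrix κ κ ℂ} {F' G' : Matrix κ κ ℂ} {s : ℂ} (hF : HD F F' s)
    (hG : HD G G' s) : HD (fun s => F s * G s) (F' * G s + F s * G') s := by
  intro a b
  simp only [Matrix.mul_apply, Matrix.add_apply, ← Finset.sum_add_distrib]
  exact HasDerivAt.fun_sum fun c _ => (hF a c).mul (hG c b)

lemma HD.uniq {F : ℂ → Matrix κ κ ℂ} {F' G' : Matrix κ κ ℂ} {s : ℂ} (hF : HD F F' s)
    (hG : HD F G' s) : F' = G' := by
  ext a b
  exact (hF a b).unique (hG a b)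

lemma HD.comp {F : ℂ → Matrix κ κ ℂ} {F' : Matrix κ κ ℂ} {r : ℂ → ℂ} {r' s : ℂ}
    (hF : HD F F' (r s)) (hr : HasDerivAt r r' s) : HD (fun s => F (r s)) (r' • F') s := by
  intro a b
  have := (hF a b).comp s hr
  simp only [Matrix.smul_apply, smul_eq_mul]
  rw [mul_comm]
  exact this

lemma HD.to {F G : ℂ → Matrix κ κ ℂ} {F' G' : Matrix κ κ ℂ} {s : ℂ} (hF : HD F F' s)
    (h : ∀ t, F t = G t) (h' : F' = G') : HD G G' s := by
  have : F = G := funext h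
  rwa [← this, ← h']

lemma HD.const_of {F : ℂ → Matrix κ κ ℂ} (h : ∀ s, HD F 0 s) (s t : ℂ) : F s = F t := by
  ext a b
  exact is_const_of_deriv_eq_zero (fun s => (h s a b).differentiableAt)
    (fun s => (h s a b).deriv) s t

lemma HD.lin {ι : Type*} [DecidableEq ι] [Fintype ι] (θ : Matrix ι ι ℂ →ₗ[ℂ] Matrix κ κ ℂ)
    {F : ℂ → Matrix ι ι ℂ} {F' : Matrix ι ι ℂ} {s : ℂ} (hF : HD F F' s) :
    HD (fun s => θ (F s)) (θ F') s := by
  have key : ∀ M a b, θ M a b = ∑ i, ∑ j, M i j * θ (Matrix.single i j 1) a b := by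
    intro M a b
    conv_lhs => rw [Matrix.matrix_eq_sum_single M]
    simp only [map_sum, Matrix.sum_apply]
    refine Finset.sum_congr rfl fun i _ => Finset.sum_congr rfl fun j _ => ?_
    have : Matrix.single i j (M i j) = (M i j) • Matrix.single i j (1 : ℂ) := by
      rw [Matrix.smul_single]; simp
    rw [this, map_smul, Matrix.smul_apply, smul_eq_mul]
  intro a b
  have e : (fun s => θ (F s) a b) =
    fun s => ∑ i, ∑ j, F s i j * θ (Matrix.single i j 1) a b := funext fun s => key (F s) a b
  rw [e, key F' a b]
  exact HasDerivAt.fun_sum fun i _ => HasDerivAt.fun_sum fun j _ => (hF i j).mul_const _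

lemma IsPoly.hd {f : ℂ → Matrix κ κ ℂ} (hf : IsPoly f) (s : ℂ) :
    HD f (Matrix.of fun a b => deriv (fun t => f t a b) s) s := by
  obtain ⟨P, hP⟩ := hf
  intro a b
  have : (fun t => f t a b) = fun t => (P a b).eval t := by
    funext t; rw [hP]; simp
  simp only [Matrix.of_apply]
  rw [this]
  exact (P a b).differentiable.differentiableAt.hasDerivAt

/-- the generator of a flow -/
noncomputable def gX {ι : Type*} (x : ι → ι → ℂ → Matrix κ κ ℂ) (i j : ι) : Matrix κ κ ℂ :=
  Matrix.of fun a b => deriv (fun t => x i j t a b) 0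

variable {ι : Type*} {x : ι → ι → ℂ → Matrix κ κ ℂ}

lemma FlowSys.hd0 (h : FlowSys x) {i j : ι} (hij : i ≠ j) : HD (x i j) (gX x i j) 0 :=
  (h.poly i j hij).hd 0

lemma FlowSys.hd (h : FlowSys x) {i j : ι} (hij : i ≠ j) (t : ℂ) :
    HD (x i j) (gX x i j * x i j t) t := by
  have h0 : HD (x i j) (gX x i j) (t - t) := by rw [sub_self]; exact h.hd0 hij
  have h1 : HD (fun s => x i j (s - t) * x i j t) _ t :=
    (HD.comp (r := fun s => s - t) h0 ((hasDerivAt_id t).sub_const t)).mul (HD.cst (x i j t) t)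
  refine h1.to (fun s => ?_) ?_
  · rw [← h.add i j hij, sub_add_cancel]
  · simp

lemma FlowSys.hd' (h : FlowSys x) {i j : ι} (hij : i ≠ j) (t : ℂ) :
    HD (x i j) (x i j t * gX x i j) t := by
  have h0 : HD (x i j) (gX x i j) (t - t) := by rw [sub_self]; exact h.hd0 hij
  have h1 : HD (fun s => x i j t * x i j (s - t)) _ t :=
    (HD.cst (x i j t) t).mul
    (HD.comp (r := fun s => s - t) h0 ((hasDerivAt_id t).sub_const t))
  refine h1.to (fun s => ?_) ?_
  · rw [← h.add i j hij, add_sub_cancel]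
  · simp

lemma FlowSys.cm (h : FlowSys x) {i j : ι} (hij : i ≠ j) (t : ℂ) :
    gX x i j * x i j t = x i j t * gX x i j := (h.hd hij t).uniq (h.hd' hij t)

lemma FlowSys.R2 (h : FlowSys x) (i j k l : ι) (hij : i ≠ j) (hkl : k ≠ l) (hil : i ≠ l)
    (hjk : j ≠ k) : ⁅gX x i j, gX x k l⁆ = 0 := by
  have h1 : ∀ t, gX x i j * x k l t = x k l t * gX x i j := by
    intro t
    have a := (h.hd0 hij).mul (HD.cst (x k l t) 0)
    have b := (HD.cst (x k l t) 0).mul (h.hd0 hij)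
    have := (a.to (fun s => h.comm i j k l hij hkl hil hjk s t) rfl).uniq b
    simpa using this
  have a := (HD.cst (gX x i j) 0).mul (h.hd0 hkl)
  have b := (h.hd0 hkl).mul (HD.cst (gX x i j) 0)
  have := (a.to (fun s => h1 s) rfl).uniq b
  rw [Ring.lie_def, sub_eq_zero]
  simpa using this

lemma FlowSys.R1 (h : FlowSys x) (i j k : ι) (hij : i ≠ j) (hjk : j ≠ k) (hik : i ≠ k) :
    ⁅gX x i j, gX x j k⁆ = gX x i k := by
  have h1 : ∀ t, gX x i j * x j k t = t • (gX x i k * x j k t) + x j k t * gX x i j := by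
    intro t
    have a := (h.hd0 hij).mul (HD.cst (x j k t) 0)
    have h0 : HD (x i k) (gX x i k) (0 * t) := by rw [zero_mul]; exact h.hd0 hik
    have b := ((HD.comp (r := fun s => s * t) h0 ((hasDerivAt_id (0:ℂ)).mul_const t)).mul
      (HD.cst (x j k t) 0)).mul (h.hd0 hij)
    have := (a.to (fun s => h.rel i j k hij hjk hik s t) rfl).uniq b
    simpa [h.zero i j hij, h.zero i k hik] using this
  have a := (HD.cst (gX x i j) 0).mul (h.hd0 hjk)
  have b1 := (HD.cst (gX x i k) 0).mul (h.hd0 hjk)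
  have b2 := (h.hd0 hjk).mul (HD.cst (gX x i j) 0)
  have b3 : HD (fun t => t • (gX x i k * x j k t) + x j k t * gX x i j)
    (gX x i k + gX x j k * gX x i j) 0 := by
    intro p q
    have := ((hasDerivAt_id (0:ℂ)).mul (b1 p q)).add (b2 p q)
    simp [h.zero j k hjk] at this
    simp [h.zero j k hjk]
    exact this
  have := (a.to (fun s => h1 s) rfl).uniq b3
  rw [Ring.lie_def, sub_eq_iff_eq_add]
  simpa using this

variable [DecidableEq ι] [Fintype ι]

lemma hd_tv (i j : ι) (s : ℂ) : HD (fun s => Matrix.transvection i j s) (Matrix.single i j 1) s := by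
  intro a b
  simp only [Matrix.transvection, Matrix.add_apply, Matrix.single_apply]
  by_cases h : i = a ∧ j = b
  · simp only [h, and_self, if_true]
    exact (hasDerivAt_id s).const_add _
  · simp only [h, if_false]
    exact hasDerivAt_const _ _

lemma single_mul_tv {i j : ι} (hij : i ≠ j) (s : ℂ) :
    Matrix.single i j (1:ℂ) * Matrix.transvection i j s = Matrix.single i j 1 := by
  rw [Matrix.transvection, mul_add, single_mul_single_of_ne _ _ _ _ hij.symm]; simp

lemma tv_mul_single {i j : ι} (hij : i ≠ j) (s : ℂ) :
    Matrix.transvection i j s * Matrix.single i j (1:ℂ) = Matrix.single i j 1 := by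
  rw [Matrix.transvection, add_mul, single_mul_single_of_ne _ _ _ _ hij.symm]; simp

/-- bundled infinitesimal data -/
structure Theta (x : ι → ι → ℂ → Matrix κ κ ℂ) (θ : Matrix ι ι ℂ →ₗ[ℂ] Matrix κ κ ℂ) : Prop where
  single : ∀ i j, i ≠ j → θ (Matrix.single i j 1) = gX x i j
  conj : ∀ i j, i ≠ j → ∀ (s : ℂ) M, x i j s * θ M =
    θ (Matrix.transvection i j s * M * Matrix.transvection i j (-s)) * x i j s

theorem FlowSys.exists_theta (h : FlowSys x) (hthird : ∀ i j : ι, ∃ k, k ≠ i ∧ k ≠ j)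
    [Nonempty ι] : ∃ θ : Matrix ι ι ℂ →ₗ[ℂ] Matrix κ κ ℂ, Theta x θ := by
  let _ : LieRing (Matrix κ κ ℂ) := LieRing.ofAssociativeRing
  let _ : LieAlgebra ℂ (Matrix κ κ ℂ) := LieAlgebra.ofAssociativeAlgebra
  obtain ⟨θ, h1, h2⟩ := DD.exists_theta (L := Matrix κ κ ℂ) (X := gX x) hthird h.R1 h.R2
  refine ⟨θ, h1, fun i j hij s M => ?_⟩
  let Z : ℂ → Matrix κ κ ℂ := fun s =>
    θ (Matrix.transvection i j s * M * Matrix.transvection i j (-s))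
  have hZ : ∀ s, HD Z (gX x i j * Z s - Z s * gX x i j) s := by
    intro s
    have a := ((hd_tv i j s).mul (HD.cst M s)).mul
      (HD.comp (r := fun s => -s) (hd_tv i j (-s)) (hasDerivAt_neg s))
    refine (a.lin θ).to (fun _ => rfl) ?_
    rw [← Ring.lie_def, ← h2 i j _ hij]
    congr 1
    have e1 := single_mul_tv hij s
    have e2 := tv_mul_single hij (-s)
    simp only [← mul_assoc, e1]
    simp only [mul_assoc, e2]
    simp [sub_eq_add_neg, mul_assoc]
  have hG : ∀ s, HD (fun s => x i j (-s) * Z s * x i j s) 0 s := by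
    intro s
    have a := ((HD.comp (r := fun s => -s) (h.hd hij (-s)) (hasDerivAt_neg s)).mul (hZ s)).mul
      (h.hd hij s)
    refine a.to (fun _ => rfl) ?_
    have e := h.cm hij (-s)
    simp only [e]
    simp only [smul_mul_assoc, neg_smul, one_smul]
    noncomm_ring
  have := HD.const_of hG s 0
  simp only [Z, neg_zero, h.zero i j hij, Matrix.transvection_zero, one_mul, mul_one] at this
  rw [← this, ← mul_assoc, ← mul_assoc, h.inv hij, one_mul]

theorem word_hd (h : FlowSys x) {θ : Matrix ι ι ℂ →ₗ[ℂ] Matrix κ κ ℂ} (hθ : Theta x θ)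
    {T : Type*} (i j : T → ι) (r : T → ℂ → ℂ) (r' : T → ℂ) (s : ℂ) (L : List T)
    (hne : ∀ q ∈ L, i q ≠ j q) (hr : ∀ q ∈ L, HasDerivAt (r q) (r' q) s) :
    ∃ D : Matrix ι ι ℂ,
      HD (fun s => (L.map fun q => Matrix.transvection (i q) (j q) (r q s)).prod)
        (D * (L.map fun q => Matrix.transvection (i q) (j q) (r q s)).prod) s ∧
      HD (fun s => (L.map fun q => x (i q) (j q) (r q s)).prod)
        (θ D * (L.map fun q => x (i q) (j q) (r q s)).prod) s := by
  induction L with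
  | nil =>
    refine ⟨0, ?_, ?_⟩
    · simpa using HD.cst (1 : Matrix ι ι ℂ) s
    · simpa using HD.cst (1 : Matrix κ κ ℂ) s
  | cons q L ih =>
    obtain ⟨D, hD1, hD2⟩ := ih (fun p hp => hne p (by simp [hp])) (fun p hp => hr p (by simp [hp]))
    have hq := hne q (by simp)
    have hrq := hr q (by simp)
    simp only [List.map_cons, List.prod_cons]
    refine ⟨r' q • Matrix.single (i q) (j q) 1 + Matrix.transvection (i q) (j q) (r q s) * D *
      Matrix.transvection (i q) (j q) (-r q s), ?_, ?_⟩
    · refine ((HD.comp (r := r q) (hd_tv (i q) (j q) (r q s)) hrq).mul hD1).to (fun _ => rfl) ?_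
      simp only [add_mul, smul_mul_assoc]
      congr 1
      · rw [← mul_assoc, single_mul_tv hq]
      · simp only [mul_assoc]
        congr 2
        rw [← mul_assoc, Matrix.transvection_mul_transvection_same _ _ hq]
        simp
    · refine ((HD.comp (r := r q) (h.hd hq (r q s)) hrq).mul hD2).to (fun _ => rfl) ?_
      rw [map_add, map_smul, hθ.single _ _ hq, add_mul]
      congr 1
      · simp only [smul_mul_assoc, mul_assoc]
      · rw [← mul_assoc, hθ.conj _ _ hq, mul_assoc]

end HD
end DD

set_option linter.unusedSimpArgs false
set_option linter.unusedSectionVars false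
open Matrix
namespace DD
open Matrix.SpecialLinearGroup

section sec
variable {ι : Type*} [DecidableEq ι] [Fintype ι]

/-- polynomial ring in matrix entries -/
abbrev MP (ι : Type*) := MvPolynomial (ι × ι) ℂ

/-- evaluation at a matrix -/
noncomputable def ev (Y : Matrix ι ι ℂ) : MP ι →+* ℂ := MvPolynomial.eval (fun q => Y q.1 q.2)

lemma clear_den {R F : Type*} [CommRing R] [Field F] (f : R →+* F)
    (L : List (ι × ι × R × R)) (hb : ∀ q ∈ L, f q.2.2.2 ≠ 0) :
    f.mapMatrix (L.map fun q => q.2.2.2 • (1 : Matrix ι ι R) + Matrix.single q.1 q.2.1 q.2.2.1).prod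
    = f (L.map fun q => q.2.2.2).prod •
      (L.map fun q => Matrix.transvection q.1 q.2.1 (f q.2.2.1 / f q.2.2.2)).prod := by
  induction L with
  | nil => simp
  | cons q L ih =>
    simp only [List.map_cons, List.prod_cons, map_mul]
    rw [ih (fun p hp => hb p (by simp [hp]))]
    have hq := hb q (by simp)
    have : f.mapMatrix (q.2.2.2 • (1 : Matrix ι ι R) + Matrix.single q.1 q.2.1 q.2.2.1) =
      f q.2.2.2 • Matrix.transvection q.1 q.2.1 (f q.2.2.1 / f q.2.2.2) := by
      ext a b
      simp [Matrix.transvection, Matrix.single_apply, Matrix.one_apply]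
      rw [mul_add]
      congr 1
      · split_ifs <;> simp
      · split_ifs <;> simp [mul_div_cancel₀ _ hq, hq]
    rw [this]
    rw [smul_mul_smul_comm]

lemma diag_inv {F : Type*} [Field F] (i0 : ι) (c : F) (hc : c ≠ 0) :
    Matrix.diagonal (Function.update (1 : ι → F) i0 c⁻¹) *
      Matrix.diagonal (Function.update 1 i0 c) = 1 := by
  rw [Matrix.diagonal_mul_diagonal, ← Matrix.diagonal_one]
  congr 1
  funext a
  by_cases h : a = i0
  · subst h; simp [hc]
  · simp [h]

theorem rat_section [Nontrivial ι] (i0 : ι) :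
    ∃ (L : List (ι × ι × MP ι × MP ι)) (d : MP ι), d ≠ 0 ∧ (∀ q ∈ L, q.1 ≠ q.2.1) ∧
      (∀ q ∈ L, q.2.2.2 ∣ d) ∧ ∀ Y : Matrix ι ι ℂ, ev Y d ≠ 0 → Y.det ≠ 0 ∧
      (L.map fun q => Matrix.transvection q.1 q.2.1 (ev Y q.2.2.1 / ev Y q.2.2.2)).prod *
        Matrix.diagonal (Function.update 1 i0 Y.det) = Y := by
  let R := MP ι
  let K := FractionRing R
  let f : R →+* K := algebraMap R K
  have hf : Function.Injective f := IsFractionRing.injective R K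
  let Yg : Matrix ι ι R := Matrix.mvPolynomialX ι ι ℂ
  have hδ : Yg.det ≠ 0 := Matrix.det_mvPolynomialX_ne_zero ι ℂ
  have hδK : f Yg.det ≠ 0 := by rwa [Ne, map_eq_zero_iff f hf]
  have hdd : ∀ (S : Type _) [CommRing S] (c : S),
      (Matrix.diagonal (Function.update (1 : ι → S) i0 c)).det = c := by
    intro S _ c
    rw [Matrix.det_diagonal, Finset.prod_update_of_mem (Finset.mem_univ _)]
    simp
  let g : SpecialLinearGroup ι K := ⟨f.mapMatrix Yg * Matrix.diagonal (Function.update 1 i0 (f Yg.det)⁻¹),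
    by rw [det_mul, ← RingHom.map_det, hdd, mul_inv_cancel₀ hδK]⟩
  have hg : ∃ L : List (ι × ι × R × R), (∀ q ∈ L, q.1 ≠ q.2.1) ∧ (∀ q ∈ L, q.2.2.2 ≠ 0) ∧
      (L.map fun q => Matrix.transvection q.1 q.2.1 (f q.2.2.1 / f q.2.2.2)).prod = g.1 := by
    refine tv_ind (fun g => ∃ L : List (ι × ι × R × R), (∀ q ∈ L, q.1 ≠ q.2.1) ∧
      (∀ q ∈ L, q.2.2.2 ≠ 0) ∧
      (L.map fun q => Matrix.transvection q.1 q.2.1 (f q.2.2.1 / f q.2.2.2)).prod = g.1) ?_ ?_ g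
    · intro i j hij c
      obtain ⟨a, b, hb, rfl⟩ := IsFractionRing.div_surjective (A := R) c
      refine ⟨[(i, j, a, b)], by simpa using hij, by simpa using nonZeroDivisors.ne_zero hb, ?_⟩
      simp [transvection_coe, Matrix.transvection, f]
    · rintro A B ⟨L, h1, h2, h3⟩ ⟨L', h1', h2', h3'⟩
      refine ⟨L ++ L', ?_, ?_, ?_⟩
      · intro q hq
        rcases List.mem_append.1 hq with h | h
        · exact h1 q h
        · exact h1' q h
      · intro q hq
        rcases List.mem_append.1 hq with h | h
        · exact h2 q h
        · exact h2' q h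
      · rw [List.map_append, List.prod_append, h3, h3', vmul]
  obtain ⟨L, h1, h2, h3⟩ := hg
  have hb : ∀ q ∈ L, f q.2.2.2 ≠ 0 := fun q hq => by
    rw [Ne, map_eq_zero_iff f hf]; exact h2 q hq
  have hpoly : (L.map fun q => q.2.2.2 • (1 : Matrix ι ι R) +
      Matrix.single q.1 q.2.1 q.2.2.1).prod * Matrix.diagonal (Function.update 1 i0 Yg.det) =
      (L.map fun q => q.2.2.2).prod • Yg := by
    have hinj : Function.Injective (f.mapMatrix : Matrix ι ι R →+* Matrix ι ι K) := by
      intro A B hAB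
      ext1 a b
      exact hf (by simpa using congrFun (congrFun hAB a) b)
    apply hinj
    rw [map_mul, clear_den f L hb, h3]
    have e1 : f.mapMatrix (Matrix.diagonal (Function.update 1 i0 Yg.det)) =
      Matrix.diagonal (Function.update 1 i0 (f Yg.det)) := by
      ext a b
      simp [Matrix.diagonal_apply, Function.update_apply]
      split_ifs <;> simp
    have e2 := diag_inv i0 (f Yg.det) hδK
    have e3 : f.mapMatrix ((L.map fun q => q.2.2.2).prod • Yg) =
      f (L.map fun q => q.2.2.2).prod • f.mapMatrix Yg := by
      ext a b; simp
    rw [e1, e3, smul_mul_assoc]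
    congr 1
    change (f.mapMatrix Yg * _) * _ = _
    rw [mul_assoc, e2, mul_one]
  refine ⟨L, Yg.det * (L.map fun q => q.2.2.2).prod, mul_ne_zero hδ ?_, h1, ?_, ?_⟩
  · apply List.prod_ne_zero
    intro h
    obtain ⟨q, hq, hq0⟩ := List.mem_map.1 h
    exact h2 q hq hq0
  · intro q hq
    exact Dvd.dvd.mul_left (List.dvd_prod (List.mem_map.2 ⟨q, hq, rfl⟩)) _
  · intro Y hY
    have hYg : (ev Y).mapMatrix Yg = Y := by
      ext a b; simp [Yg, ev, Matrix.mvPolynomialX]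
    have hdet : ev Y Yg.det = Y.det := by rw [RingHom.map_det, hYg]
    rw [map_mul, hdet] at hY
    have hY1 := left_ne_zero_of_mul hY
    have hY2 := right_ne_zero_of_mul hY
    refine ⟨hY1, ?_⟩
    have hb' : ∀ q ∈ L, ev Y q.2.2.2 ≠ 0 := by
      intro q hq h0
      apply hY2
      obtain ⟨c, hc⟩ := List.dvd_prod (List.mem_map.2 ⟨q, hq, rfl⟩ : q.2.2.2 ∈ L.map fun q => q.2.2.2)
      rw [hc, map_mul, h0, zero_mul]
    have := congrArg (ev Y).mapMatrix hpoly
    rw [map_mul, clear_den (ev Y) L hb'] at this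
    have e1 : (ev Y).mapMatrix (Matrix.diagonal (Function.update 1 i0 Yg.det)) =
      Matrix.diagonal (Function.update 1 i0 Y.det) := by
      rw [← hdet]
      ext a b
      simp [Matrix.diagonal_apply, Function.update_apply]
      split_ifs <;> simp
    have e3 : (ev Y).mapMatrix ((L.map fun q => q.2.2.2).prod • Yg) =
      ev Y (L.map fun q => q.2.2.2).prod • (ev Y).mapMatrix Yg := by
      ext a b; simp
    rw [e1, e3, hYg, smul_mul_assoc] at this
    exact smul_right_injective _ hY2 this

end sec
end DD

set_option linter.unusedSimpArgs false
set_option linter.unusedSectionVars false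
open Matrix
namespace DD
open Matrix.SpecialLinearGroup

section eqv
variable {ι : Type*} [DecidableEq ι] [Fintype ι] {κ : Type*} [DecidableEq κ] [Fintype κ]

structure RS (i0 : ι) (L : List (ι × ι × MP ι × MP ι)) (d : MP ι) : Prop where
  ne0 : d ≠ 0
  ne : ∀ q ∈ L, q.1 ≠ q.2.1
  dvd : ∀ q ∈ L, q.2.2.2 ∣ d
  det : ∀ Y : Matrix ι ι ℂ, ev Y d ≠ 0 → Y.det ≠ 0
  eq : ∀ Y : Matrix ι ι ℂ, ev Y d ≠ 0 → 
      (L.map fun q => Matrix.transvection q.1 q.2.1 (ev Y q.2.2.1 / ev Y q.2.2.2)).prod *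
        Matrix.diagonal (Function.update 1 i0 Y.det) = Y

theorem exists_RS [Nontrivial ι] (i0 : ι) : ∃ L d, RS i0 L d := by
  obtain ⟨L, d, h1, h2, h3, h4⟩ := rat_section i0
  exact ⟨L, d, h1, h2, h3, fun Y h => (h4 Y h).1, fun Y h => (h4 Y h).2⟩

lemma RS.den {i0 : ι} {L d} (h : RS i0 L d) {Y : Matrix ι ι ℂ} (hY : ev Y d ≠ 0) :
    ∀ q ∈ L, ev Y q.2.2.2 ≠ 0 := by
  intro q hq h0
  obtain ⟨c, hc⟩ := h.dvd q hq
  apply hY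
  rw [hc, map_mul, h0, zero_mul]

lemma ev_poly {Y : ℂ → Matrix ι ι ℂ} (hY : IsPoly Y) (p : MP ι) :
    ∃ P : Polynomial ℂ, ∀ s, ev (Y s) p = P.eval s := by
  obtain ⟨Q, hQ⟩ := hY
  refine ⟨MvPolynomial.eval₂ Polynomial.C (fun q => Q q.1 q.2) p, fun s => ?_⟩
  rw [← Polynomial.coe_evalRingHom, MvPolynomial.eval₂_comp_left]
  have : (Polynomial.evalRingHom s).comp Polynomial.C = RingHom.id ℂ := by ext; simp
  rw [this]
  simp only [ev, MvPolynomial.eval, MvPolynomial.coe_eval₂Hom]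
  congr 1
  funext q
  rw [hQ]
  simp

lemma HD.congr {F G : ℂ → Matrix κ κ ℂ} {F' : Matrix κ κ ℂ} {s : ℂ} (hF : HD F F' s)
    (h : ∀ᶠ t in nhds s, F t = G t) : HD G F' s := by
  intro a b
  refine (hF a b).congr_of_eventuallyEq ?_
  filter_upwards [h] with t ht
  rw [ht]

/-- the rational map -/
noncomputable def ratF (x : ι → ι → ℂ → Matrix κ κ ℂ) (L : List (ι × ι × MP ι × MP ι))
    (Y : Matrix ι ι ℂ) : Matrix κ κ ℂ :=
  (L.map fun q => x q.1 q.2.1 (ev Y q.2.2.1 / ev Y q.2.2.2)).prod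

lemma isPoly_tv (i j : ι) : IsPoly (fun s => Matrix.transvection i j s) := by
  refine ⟨Matrix.transvection i j Polynomial.X, fun s => ?_⟩
  ext a b
  simp [Matrix.transvection, Matrix.single_apply, Matrix.one_apply]
  split_ifs <;> simp

theorem ratF_eqv {x : ι → ι → ℂ → Matrix κ κ ℂ} (h : FlowSys x)
    {θ : Matrix ι ι ℂ →ₗ[ℂ] Matrix κ κ ℂ} (hθ : Theta x θ) {i0 : ι} {L d} (hR : RS i0 L d)
    {i j : ι} (hij : i ≠ j) (Y : Matrix ι ι ℂ) (s : ℂ) (h0 : ev Y d ≠ 0)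
    (hs : ev (Matrix.transvection i j s * Y) d ≠ 0) :
    ratF x L (Matrix.transvection i j s * Y) = x i j s * ratF x L Y := by
  let Ys : ℂ → Matrix ι ι ℂ := fun s => Matrix.transvection i j s * Y
  have hYs : IsPoly Ys := (isPoly_tv i j).mul (IsPoly.const Y)
  have hY0 : Ys 0 = Y := by simp [Ys]
  choose P hP using fun p => ev_poly hYs p
  let U : Set ℂ := {s | (P d).eval s ≠ 0}
  have hUo : IsOpen U := isOpen_ne_fun (P d).continuous continuous_const
  have hPd : P d ≠ 0 := by
    intro h0'
    have := hP d 0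
    rw [h0', hY0] at this
    exact h0 (by simpa using this)
  have hUc : IsPreconnected U := by
    have hfin : ({s | (P d).IsRoot s} : Set ℂ).Countable := by
      refine Set.Finite.countable ?_
      exact Polynomial.finite_setOfPred_isRoot hPd
    have := (hfin.isPathConnected_compl_of_one_lt_rank (by simp [Complex.rank_real_complex])
      ).isConnected.isPreconnected
    exact this
  have hdet : ∀ s, (Ys s).det = Y.det := by
    intro s
    simp [Ys, Matrix.det_transvection_of_ne i j hij]
  have hdY := hR.det Y h0
  let C : Matrix ι ι ℂ := Matrix.diagonal (Function.update 1 i0 Y.det)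
  let C' : Matrix ι ι ℂ := Matrix.diagonal (Function.update 1 i0 (Y.det)⁻¹)
  have hCC : C * C' = 1 := by
    have := diag_inv i0 (Y.det)⁻¹ (inv_ne_zero hdY)
    rwa [inv_inv] at this
  let W : ℂ → Matrix ι ι ℂ := fun s =>
    (L.map fun q => Matrix.transvection q.1 q.2.1 (ev (Ys s) q.2.2.1 / ev (Ys s) q.2.2.2)).prod
  have hW : ∀ s ∈ U, W s = Matrix.transvection i j s * (Y * C') := by
    intro s hs
    have := hR.eq (Ys s) (by rw [hP]; exact hs)
    rw [hdet] at this
    have h2 := congrArg (· * C') this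
    beta_reduce at h2
    rw [mul_assoc] at h2
    change W s * (C * C') = _ at h2
    rw [hCC, mul_one] at h2
    rw [h2, mul_assoc]
  have hF : ∀ s ∈ U, HD (fun s => ratF x L (Ys s)) (gX x i j * ratF x L (Ys s)) s := by
    intro s hs
    have hs' : ev (Ys s) d ≠ 0 := by rw [hP]; exact hs
    have hr : ∀ q ∈ L, HasDerivAt (fun s => ev (Ys s) q.2.2.1 / ev (Ys s) q.2.2.2)
        (deriv (fun s => ev (Ys s) q.2.2.1 / ev (Ys s) q.2.2.2) s) s := by
      intro q hq
      apply DifferentiableAt.hasDerivAt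
      have e := hR.den hs' q hq
      simp only [hP] at e ⊢
      exact (P q.2.2.1).differentiableAt.div (P q.2.2.2).differentiableAt e
    obtain ⟨D, hD1, hD2⟩ := word_hd h hθ (fun q : ι × ι × MP ι × MP ι => q.1) (fun q => q.2.1)
      (fun q s => ev (Ys s) q.2.2.1 / ev (Ys s) q.2.2.2) _ s L hR.ne hr
    change HD W (D * W s) s at hD1
    have hev : ∀ᶠ t in nhds s, Matrix.transvection i j t * (Y * C') = W t := by
      filter_upwards [hUo.mem_nhds hs] with t ht
      rw [hW t ht]
    have a : HD W _ s := ((hd_tv i j s).mul (HD.cst (Y * C') s)).congr hev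
    have e := hD1.uniq a
    have hu : IsUnit (W s) := by
      rw [Matrix.isUnit_iff_isUnit_det]
      have := congrArg Matrix.det (hR.eq (Ys s) hs')
      rw [det_mul, hdet] at this
      refine isUnit_of_mul_isUnit_left (y := (diagonal (Function.update 1 i0 Y.det)).det) ?_
      change IsUnit (_ * _)
      rw [this]
      exact hdY.isUnit
    have hDE : D = Matrix.single i j 1 := by
      apply hu.mul_right_cancel
      rw [e, hW s hs, ← mul_assoc (Matrix.single i j 1) (Matrix.transvection i j s), single_mul_tv hij]
      simp
    rw [hDE, hθ.single i j hij] at hD2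
    exact hD2
  let G : ℂ → Matrix κ κ ℂ := fun s => x i j (-s) * ratF x L (Ys s)
  have hG : ∀ s ∈ U, HD G 0 s := by
    intro s hs
    refine ((HD.comp (r := fun s => -s) (h.hd' hij (-s)) (hasDerivAt_neg s)).mul (hF s hs)).to
      (fun _ => rfl) ?_
    simp [mul_assoc]
  have h0U : (0 : ℂ) ∈ U := by
    change (P d).eval 0 ≠ 0
    rw [← hP, hY0]; exact h0
  have hsU : s ∈ U := by
    change (P d).eval s ≠ 0
    rw [← hP]; exact hs
  have hc : G s = G 0 := by
    ext a b
    refine hUo.is_const_of_deriv_eq_zero hUc (f := fun s => G s a b) ?_ ?_ hsU h0U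
    · intro t ht
      exact (hG t ht a b).differentiableAt.differentiableWithinAt
    · intro t ht
      exact (hG t ht a b).deriv
  simp only [G, neg_zero, h.zero i j hij, one_mul, hY0] at hc
  rw [← hc, ← mul_assoc, h.inv hij, one_mul]

end eqv
end DD

set_option linter.unusedSimpArgs false
set_option linter.unusedSectionVars false
open Matrix
namespace DD
open Matrix.SpecialLinearGroup

section rep
variable {ι : Type*} [DecidableEq ι] [Fintype ι] {κ : Type*} [DecidableEq κ] [Fintype κ]

lemma ev_sub (A B : Matrix ι ι ℂ) (p : MP ι) : ∃ p' : MP ι, ∀ Y, ev Y p' = ev (A * Y * B) p := by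
  let Q : Matrix ι ι (MP ι) := A.map MvPolynomial.C * Matrix.mvPolynomialX ι ι ℂ * B.map MvPolynomial.C
  refine ⟨MvPolynomial.eval₂ MvPolynomial.C (fun q => Q q.1 q.2) p, fun Y => ?_⟩
  rw [MvPolynomial.eval₂_comp_left]
  have : (ev Y).comp MvPolynomial.C = RingHom.id ℂ := by ext; simp [ev]
  rw [this]
  have hQ : (ev Y).mapMatrix Q = A * Y * B := by
    simp only [Q, map_mul]
    congr 1
    · congr 1
      · ext a b; simp [ev]
      · exact Matrix.mvPolynomialX_mapMatrix_eval Y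
    · ext a b; simp [ev]
  rw [← hQ]
  conv_rhs => simp only [ev, MvPolynomial.eval, MvPolynomial.coe_eval₂Hom]
  congr 1

def Gen (S : Matrix ι ι ℂ → Prop) : Prop := ∃ u : MP ι, u ≠ 0 ∧ ∀ Y, ev Y u ≠ 0 → S Y

lemma exists_ev_ne {u : MP ι} (hu : u ≠ 0) : ∃ Y : Matrix ι ι ℂ, ev Y u ≠ 0 := by
  by_contra! h
  apply hu
  apply MvPolynomial.funext
  intro v
  have := h (Matrix.of fun i j => v (i, j))
  simpa [ev] using this

lemma Gen.ex {S : Matrix ι ι ℂ → Prop} (h : Gen S) : ∃ Y, S Y := by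
  obtain ⟨u, hu, h⟩ := h
  obtain ⟨Y, hY⟩ := exists_ev_ne hu
  exact ⟨Y, h Y hY⟩

lemma Gen.and {S T : Matrix ι ι ℂ → Prop} (h : Gen S) (h' : Gen T) : Gen (fun Y => S Y ∧ T Y) := by
  obtain ⟨u, hu, h⟩ := h
  obtain ⟨v, hv, h'⟩ := h'
  refine ⟨u * v, mul_ne_zero hu hv, fun Y hY => ?_⟩
  rw [map_mul] at hY
  exact ⟨h Y (left_ne_zero_of_mul hY), h' Y (right_ne_zero_of_mul hY)⟩

lemma Gen.mono {S T : Matrix ι ι ℂ → Prop} (h : Gen S) (h' : ∀ Y, S Y → T Y) : Gen T := by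
  obtain ⟨u, hu, h⟩ := h
  exact ⟨u, hu, fun Y hY => h' Y (h Y hY)⟩

lemma Gen.tr {S : Matrix ι ι ℂ → Prop} (h : Gen S) (A B : Matrix ι ι ℂ) (hAB : A * B = 1) :
    Gen (fun Y => S (A * Y)) := by
  obtain ⟨u, hu, h⟩ := h
  obtain ⟨p, hp⟩ := ev_sub A 1 u
  refine ⟨p, ?_, fun Y hY => h _ ?_⟩
  · rintro rfl
    obtain ⟨Y, hY⟩ := exists_ev_ne hu
    have := hp (B * Y)
    rw [← mul_assoc, hAB] at this
    simp at this
    exact hY this.symm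
  · rw [hp] at hY
    simpa using hY

/-- word in elementary matrices -/
noncomputable def wE (w : List (ι × ι × ℂ)) : Matrix ι ι ℂ :=
  (w.map fun q => Matrix.transvection q.1 q.2.1 q.2.2).prod

/-- word in the flows -/
noncomputable def wX (x : ι → ι → ℂ → Matrix κ κ ℂ) (w : List (ι × ι × ℂ)) : Matrix κ κ ℂ :=
  (w.map fun q => x q.1 q.2.1 q.2.2).prod

lemma wE_det (w : List (ι × ι × ℂ)) (hw : ∀ q ∈ w, q.1 ≠ q.2.1) : (wE w).det = 1 := by
  induction w with
  | nil => simp [wE]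
  | cons q w ih =>
    have := ih (fun p hp => hw p (by simp [hp]))
    simp only [wE, List.map_cons, List.prod_cons] at this ⊢
    rw [det_mul, this, Matrix.det_transvection_of_ne _ _ (hw q (by simp)), mul_one]

lemma wX_isUnit {x : ι → ι → ℂ → Matrix κ κ ℂ} (h : FlowSys x) (w : List (ι × ι × ℂ))
    (hw : ∀ q ∈ w, q.1 ≠ q.2.1) : IsUnit (wX x w) := by
  induction w with
  | nil => simp [wX]
  | cons q w ih =>
    have := ih (fun p hp => hw p (by simp [hp]))
    simp only [wX, List.map_cons, List.prod_cons] at this ⊢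
    have hq := hw q (by simp)
    exact IsUnit.mul ⟨⟨_, _, h.inv hq _, h.inv' hq _⟩, rfl⟩ this

lemma word_gen {x : ι → ι → ℂ → Matrix κ κ ℂ} (h : FlowSys x)
    {θ : Matrix ι ι ℂ →ₗ[ℂ] Matrix κ κ ℂ} (hθ : Theta x θ) {i0 : ι} {L d} (hR : RS i0 L d)
    (w : List (ι × ι × ℂ)) (hw : ∀ q ∈ w, q.1 ≠ q.2.1) :
    Gen (fun Y => ev Y d ≠ 0 ∧ ev (wE w * Y) d ≠ 0 ∧
      ratF x L (wE w * Y) = wX x w * ratF x L Y) := by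
  have hd : Gen (fun Y : Matrix ι ι ℂ => ev Y d ≠ 0) := ⟨d, hR.ne0, fun Y h => h⟩
  induction w with
  | nil => exact hd.mono fun Y hY => by simp [wE, wX, hY]
  | cons q w ih =>
    have hdt := wE_det _ hw
    have := hd.tr (wE (q :: w)) ((wE (q :: w))⁻¹)
      (Matrix.mul_nonsing_inv _ (by rw [hdt]; exact isUnit_one))
    refine (this.and (ih (fun p hp => hw p (by simp [hp])))).mono ?_
    rintro Y ⟨h1, h2, h3, h4⟩
    refine ⟨h2, h1, ?_⟩
    have e : wE (q :: w) * Y = Matrix.transvection q.1 q.2.1 q.2.2 * (wE w * Y) := by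
      simp [wE, mul_assoc]
    rw [e] at h1 ⊢
    rw [ratF_eqv h hθ hR (hw q (by simp)) _ _ h3 h1, h4]
    simp [wX, mul_assoc]

lemma ratF_eq_wX (x : ι → ι → ℂ → Matrix κ κ ℂ) (L : List (ι × ι × MP ι × MP ι)) (Y) :
    ratF x L Y = wX x (L.map fun q => (q.1, q.2.1, ev Y q.2.2.1 / ev Y q.2.2.2)) := by
  simp [ratF, wX, List.map_map, Function.comp_def]

theorem exists_rep [Nontrivial ι] {x : ι → ι → ℂ → Matrix κ κ ℂ} (h : FlowSys x)
    {θ : Matrix ι ι ℂ →ₗ[ℂ] Matrix κ κ ℂ} (hθ : Theta x θ) {i0 : ι} {L d} (hR : RS i0 L d) :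
    ∃ R : SpecialLinearGroup ι ℂ →* Matrix κ κ ℂ,
      (∀ i j (hij : i ≠ j) t, R (SpecialLinearGroup.transvection hij t) = x i j t) ∧
      ∀ (Y : Matrix ι ι ℂ) (g : SpecialLinearGroup ι ℂ), ev Y d ≠ 0 →
        g.1 * Matrix.diagonal (Function.update 1 i0 Y.det) = Y → ratF x L Y = R g := by
  have wd : ∀ w w' : List (ι × ι × ℂ), (∀ q ∈ w, q.1 ≠ q.2.1) → (∀ q ∈ w', q.1 ≠ q.2.1) →
      wE w = wE w' → wX x w = wX x w' := by
    intro w w' hw hw' hww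
    obtain ⟨Y, ⟨h1, h2, h3⟩, ⟨h4, h5, h6⟩⟩ := ((word_gen h hθ hR w hw).and (word_gen h hθ hR w' hw')).ex
    rw [← hww, h3] at h6
    refine IsUnit.mul_right_cancel ?_ h6
    rw [ratF_eq_wX]
    apply wX_isUnit h
    intro q hq
    obtain ⟨p, hp, rfl⟩ := List.mem_map.1 hq
    exact hR.ne p hp
  have ex : ∀ g : SpecialLinearGroup ι ℂ, ∃ w : List (ι × ι × ℂ), (∀ q ∈ w, q.1 ≠ q.2.1) ∧
      wE w = g.1 := by
    intro g
    refine tv_ind (fun g => ∃ w : List (ι × ι × ℂ), (∀ q ∈ w, q.1 ≠ q.2.1) ∧ wE w = g.1) ?_ ?_ g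
    · intro i j hij t
      exact ⟨[(i, j, t)], by simpa using hij, by simp [wE, transvection_coe, Matrix.transvection]⟩
    · rintro A B ⟨w, h1, h2⟩ ⟨w', h1', h2'⟩
      refine ⟨w ++ w', ?_, ?_⟩
      · intro q hq
        rcases List.mem_append.1 hq with h | h
        · exact h1 q h
        · exact h1' q h
      · rw [vmul, ← h2, ← h2']
        simp [wE]
  choose W hW1 hW2 using ex
  let R : SpecialLinearGroup ι ℂ →* Matrix κ κ ℂ :=
    { toFun := fun g => wX x (W g)
      map_one' := by
        rw [wd (W 1) [] (hW1 1) (by simp) (by rw [hW2]; simp [wE])]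
        simp [wX]
      map_mul' := by
        intro A B
        rw [wd (W (A * B)) (W A ++ W B) (hW1 _) ?_ ?_]
        · simp [wX]
        · intro q hq
          rcases List.mem_append.1 hq with h | h
          · exact hW1 _ q h
          · exact hW1 _ q h
        · rw [hW2, vmul, ← hW2 A, ← hW2 B]
          simp [wE] }
  have hR' : ∀ g w, (∀ q ∈ w, q.1 ≠ q.2.1) → wE w = g.1 → R g = wX x w := by
    intro g w h1 h2
    exact wd _ _ (hW1 g) h1 (by rw [hW2, h2])
  refine ⟨R, ?_, ?_⟩
  · intro i j hij t
    rw [hR' _ [(i, j, t)] (by simpa using hij) (by simp [wE, transvection_coe, Matrix.transvection])]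
    simp [wX]
  · intro Y g hY hg
    rw [ratF_eq_wX]
    symm
    apply hR'
    · intro q hq
      obtain ⟨p, hp, rfl⟩ := List.mem_map.1 hq
      exact hR.ne p hp
    · have h1 := hR.eq Y hY
      have hdY := hR.det Y hY
      have hCC : Matrix.diagonal (Function.update (1 : ι → ℂ) i0 Y.det) *
          Matrix.diagonal (Function.update 1 i0 (Y.det)⁻¹) = 1 := by
        have := diag_inv i0 (Y.det)⁻¹ (inv_ne_zero hdY)
        rwa [inv_inv] at this
      have h2 := congrArg (· * Matrix.diagonal (Function.update 1 i0 (Y.det)⁻¹)) (h1.trans hg.symm)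
      beta_reduce at h2
      rw [mul_assoc, mul_assoc, hCC, mul_one, mul_one] at h2
      rw [← h2]
      simp [wE, List.map_map, Function.comp_def]

end rep
end DD

set_option linter.unusedSimpArgs false
set_option linter.unusedSectionVars false
open Matrix
namespace DD
open Matrix.SpecialLinearGroup

section alg
variable {ι : Type*} [DecidableEq ι] [Fintype ι] {κ : Type*} [DecidableEq κ] [Fintype κ]

def Rat' (d : MP ι) (f : Matrix ι ι ℂ → ℂ) : Prop :=
  ∃ (M : ℕ) (Q : MP ι), ∀ Y, ev Y d ≠ 0 → ev Y d ^ M * f Y = ev Y Q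

lemma Rat'.cst (d : MP ι) (c : ℂ) : Rat' d (fun _ => c) :=
  ⟨0, MvPolynomial.C c, fun Y _ => by simp [ev]⟩

lemma Rat'.mul {d : MP ι} {f g : Matrix ι ι ℂ → ℂ} (hf : Rat' d f) (hg : Rat' d g) :
    Rat' d (fun Y => f Y * g Y) := by
  obtain ⟨M, Q, h⟩ := hf
  obtain ⟨M', Q', h'⟩ := hg
  refine ⟨M + M', Q * Q', fun Y hY => ?_⟩
  rw [map_mul, ← h Y hY, ← h' Y hY, pow_add]
  ring

lemma Rat'.add {d : MP ι} {f g : Matrix ι ι ℂ → ℂ} (hf : Rat' d f) (hg : Rat' d g) :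
    Rat' d (fun Y => f Y + g Y) := by
  obtain ⟨M, Q, h⟩ := hf
  obtain ⟨M', Q', h'⟩ := hg
  refine ⟨M + M', d ^ M' * Q + d ^ M * Q', fun Y hY => ?_⟩
  rw [map_add, map_mul, map_mul, map_pow, map_pow, ← h Y hY, ← h' Y hY, pow_add]
  ring

lemma Rat'.sum {d : MP ι} {T : Type*} (s : Finset T) {f : T → Matrix ι ι ℂ → ℂ}
    (hf : ∀ t, Rat' d (f t)) : Rat' d (fun Y => ∑ t ∈ s, f t Y) := by
  classical
  induction s using Finset.induction_on with
  | empty => simpa using Rat'.cst d 0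
  | insert a s ha ih =>
    simp only [Finset.sum_insert ha]
    exact (hf a).add ih

lemma Rat'.pow {d : MP ι} {f : Matrix ι ι ℂ → ℂ} (hf : Rat' d f) (k : ℕ) :
    Rat' d (fun Y => f Y ^ k) := by
  induction k with
  | zero => simpa using Rat'.cst d 1
  | succ k ih =>
    simp only [pow_succ]
    exact ih.mul hf

lemma Rat'.poly {d : MP ι} {f : Matrix ι ι ℂ → ℂ} (hf : Rat' d f) (p : Polynomial ℂ) :
    Rat' d (fun Y => p.eval (f Y)) := by
  simp only [Polynomial.eval_eq_sum_range]
  exact Rat'.sum _ fun t => (Rat'.cst d _).mul (hf.pow t)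

lemma Rat'.div {d : MP ι} (a b : MP ι) (hb : b ∣ d) : Rat' d (fun Y => ev Y a / ev Y b) := by
  obtain ⟨c, rfl⟩ := hb
  refine ⟨1, a * c, fun Y hY => ?_⟩
  rw [map_mul] at hY
  have := left_ne_zero_of_mul hY
  rw [pow_one, map_mul, map_mul]
  field_simp

lemma ratF_rat {x : ι → ι → ℂ → Matrix κ κ ℂ} (h : FlowSys x) (d : MP ι)
    (L : List (ι × ι × MP ι × MP ι)) (hne : ∀ q ∈ L, q.1 ≠ q.2.1) (hd : ∀ q ∈ L, q.2.2.2 ∣ d) :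
    ∀ a b, Rat' d (fun Y => ratF x L Y a b) := by
  induction L with
  | nil =>
    intro a b
    simpa [ratF] using Rat'.cst d ((1 : Matrix κ κ ℂ) a b)
  | cons q L ih =>
    intro a b
    have ih' := ih (fun p hp => hne p (by simp [hp])) (fun p hp => hd p (by simp [hp]))
    obtain ⟨P, hP⟩ := h.poly _ _ (hne q (by simp))
    have e : (fun Y => ratF x (q :: L) Y a b) = fun Y => ∑ c,
        (P a c).eval (ev Y q.2.2.1 / ev Y q.2.2.2) * ratF x L Y c b := by
      funext Y
      simp only [ratF, List.map_cons, List.prod_cons, Matrix.mul_apply]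
      refine Finset.sum_congr rfl fun c _ => ?_
      rw [hP]
      simp
    rw [e]
    exact Rat'.sum _ fun c => ((Rat'.div _ _ (hd q (by simp))).poly _).mul (ih' c b)

theorem rep_alg {x : ι → ι → ℂ → Matrix κ κ ℂ} (h : FlowSys x) {i0 : ι} {L d} (hR : RS i0 L d)
    (R : SpecialLinearGroup ι ℂ →* Matrix κ κ ℂ)
    (hF : ∀ (Y : Matrix ι ι ℂ) (g : SpecialLinearGroup ι ℂ), ev Y d ≠ 0 →
        g.1 * Matrix.diagonal (Function.update 1 i0 Y.det) = Y → ratF x L Y = R g) (a b : κ) :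
    ∃ P : MP ι, ∀ g : SpecialLinearGroup ι ℂ, R g a b = ev g.1 P := by
  obtain ⟨y0, hy0⟩ := exists_ev_ne hR.ne0
  have hdY := hR.det y0 hy0
  let C : Matrix ι ι ℂ := Matrix.diagonal (Function.update 1 i0 y0.det)
  have hCC : Matrix.diagonal (Function.update (1 : ι → ℂ) i0 (y0.det)⁻¹) * C = 1 :=
    diag_inv i0 y0.det hdY
  have hdC : C.det = y0.det := by
    simp only [C]
    rw [Matrix.det_diagonal, Finset.prod_update_of_mem (Finset.mem_univ _)]
    simp
  let s0 : SpecialLinearGroup ι ℂ :=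
    ⟨y0 * Matrix.diagonal (Function.update (1 : ι → ℂ) i0 (y0.det)⁻¹), by
      have := congrArg Matrix.det hCC
      rw [det_mul, hdC, det_one] at this
      rw [det_mul, mul_comm, this]⟩
  have hs0 : s0.1 * C = y0 := by
    change y0 * _ * C = y0
    rw [mul_assoc, hCC, mul_one]
  have key : ∀ g : SpecialLinearGroup ι ℂ, ev (g.1 * y0) d ≠ 0 →
      ratF x L (g.1 * y0) = R g * R s0 := by
    intro g hg
    rw [hF _ (g * s0) hg, map_mul]
    rw [det_mul, g.2, one_mul, vmul, mul_assoc]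
    exact congrArg _ hs0
  let I : Ideal (MP ι) :=
    { carrier := {p | ∃ Q : MP ι, ∀ g : SpecialLinearGroup ι ℂ, ev g.1 p * R g a b = ev g.1 Q}
      zero_mem' := ⟨0, fun g => by simp⟩
      add_mem' := by
        rintro p q ⟨P, hP⟩ ⟨Q, hQ⟩
        exact ⟨P + Q, fun g => by rw [map_add, map_add, ← hP, ← hQ]; ring⟩
      smul_mem' := by
        rintro c q ⟨Q, hQ⟩
        exact ⟨c * Q, fun g => by rw [smul_eq_mul, map_mul, map_mul, ← hQ]; ring⟩ }
  have hI : MvPolynomial.zeroLocus ℂ I = ∅ := by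
    rw [Set.eq_empty_iff_forall_notMem]
    intro v hv
    rw [MvPolynomial.mem_zeroLocus_iff] at hv
    let Y : Matrix ι ι ℂ := Matrix.of fun i j => v (i, j)
    have hv' : ∀ p ∈ I, ev Y p = 0 := by
      intro p hp
      have := hv p hp
      rw [MvPolynomial.aeval_eq_eval] at this
      exact this
    have hYg : ∀ Y : Matrix ι ι ℂ, ev Y (Matrix.mvPolynomialX ι ι ℂ).det = Y.det := by
      intro Y
      rw [RingHom.map_det]
      congr 1
      exact Matrix.mvPolynomialX_mapMatrix_eval Y
    have hdet : Y.det = 1 := by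
      have := hv' ((Matrix.mvPolynomialX ι ι ℂ).det - 1) ⟨0, fun g => by
        rw [map_sub, hYg, g.2]; simp⟩
      rw [map_sub, hYg, map_one] at this
      exact sub_eq_zero.1 this
    let z : SpecialLinearGroup ι ℂ := ⟨Y, hdet⟩
    have hrat : Rat' d (fun Y => (R z * ratF x L Y * R s0⁻¹) a b) := by
      simp only [Matrix.mul_apply]
      exact Rat'.sum _ fun c => (Rat'.sum _ fun e => (Rat'.cst d _).mul
        (ratF_rat h d L hR.ne hR.dvd e c)).mul (Rat'.cst d _)
    obtain ⟨M, Q, hQ⟩ := hrat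
    obtain ⟨p, hp⟩ := ev_sub (z⁻¹).1 y0 (d ^ (M + 1))
    obtain ⟨p', hp'⟩ := ev_sub (z⁻¹).1 y0 (d * Q)
    have hpI : p ∈ I := by
      refine ⟨p', fun g => ?_⟩
      rw [hp, hp', map_pow, map_mul]
      by_cases h0 : ev ((z⁻¹).1 * g.1 * y0) d = 0
      · rw [h0]; simp
      · rw [← hQ _ h0]
        have := key (z⁻¹ * g) h0
        rw [vmul] at this
        beta_reduce
        rw [this]
        have e : R z * (R (z⁻¹ * g) * R s0) * R s0⁻¹ = R g := by
          rw [← map_mul, ← map_mul, ← map_mul]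
          congr 1
          group
        rw [e]
        ring
    have := hv' p hpI
    rw [hp, map_pow] at this
    have h2 : (z⁻¹).1 * Y * y0 = y0 := by
      have : (z⁻¹).1 * z.1 = 1 := by rw [← vmul, inv_mul_cancel]; rfl
      change (z⁻¹).1 * z.1 * y0 = y0
      rw [this, one_mul]
    rw [h2] at this
    exact hy0 (pow_eq_zero_iff (by omega) |>.1 this)
  have hrad := MvPolynomial.vanishingIdeal_zeroLocus_eq_radical (K := ℂ) I
  rw [hI, MvPolynomial.vanishingIdeal_empty] at hrad
  have : (1 : MP ι) ∈ I := by
    rw [← Ideal.eq_top_iff_one]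
    exact Ideal.radical_eq_top.1 hrad.symm
  obtain ⟨Q, hQ⟩ := this
  exact ⟨Q, fun g => by rw [← hQ]; simp⟩

end alg
end DD

set_option linter.unusedSimpArgs false
set_option linter.unusedSectionVars false
open Matrix
namespace DD
open Matrix.SpecialLinearGroup

section grp
variable {G H : Type*} [Group G] [Group H] (A ρ : G →* H) (T : Subgroup H) (hA : ∀ g, A g ∈ T)

/-- subgroup of elements whose cocycle centralizes `T` -/
def Scen (hA : ∀ g, A g ∈ T) : Subgroup G where
  carrier := {g | ∀ h ∈ T, (A g)⁻¹ * ρ g * h = h * ((A g)⁻¹ * ρ g)}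
  one_mem' := by intro h _; simp
  mul_mem' := by
    intro a b ha hb h hh
    have e1 := ha _ (T.inv_mem (hA b))
    have e : (A (a * b))⁻¹ * ρ (a * b) = ((A a)⁻¹ * ρ a) * ((A b)⁻¹ * ρ b) := by
      calc (A (a * b))⁻¹ * ρ (a * b) = ((A b)⁻¹ * ((A a)⁻¹ * ρ a)) * ρ b := by
            rw [map_mul, map_mul, _root_.mul_inv_rev]; group
        _ = _ := by rw [← e1]; group
    rw [e, mul_assoc, hb h hh, ← mul_assoc, ha h hh, mul_assoc]
  inv_mem' := by
    intro a ha h hh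
    have e1 := ha _ (hA a)
    have e : (A a⁻¹)⁻¹ * ρ a⁻¹ = ((A a)⁻¹ * ρ a)⁻¹ := by
      have e2 : ρ a * A a = A a * ρ a := by
        calc ρ a * A a = A a * ((A a)⁻¹ * ρ a * A a) := by group
          _ = _ := by rw [e1]; group
      rw [map_inv, map_inv, inv_inv, _root_.mul_inv_rev, inv_inv]
      calc A a * (ρ a)⁻¹ = (ρ a)⁻¹ * (ρ a * A a) * (ρ a)⁻¹ := by group
        _ = _ := by rw [e2]; group
    have e3 := ha h hh
    rw [e]
    calc ((A a)⁻¹ * ρ a)⁻¹ * h = ((A a)⁻¹ * ρ a)⁻¹ * (h * ((A a)⁻¹ * ρ a)) * ((A a)⁻¹ * ρ a)⁻¹ := by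
            group
      _ = _ := by rw [← e3]; group

lemma eqLocus_normal (hS : ∀ g, g ∈ Scen A ρ T hA) : (MonoidHom.eqLocus ρ A).Normal := by
  refine ⟨fun n hn g => ?_⟩
  have hn' : ρ n = A n := hn
  change ρ (g * n * g⁻¹) = A (g * n * g⁻¹)
  have e := hS g _ (hA n)
  simp only [map_mul, map_inv, hn']
  calc ρ g * A n * (ρ g)⁻¹ = A g * ((A g)⁻¹ * ρ g * A n) * (ρ g)⁻¹ := by group
    _ = _ := by rw [e]; group

end grp

section main
variable {κ : Type*} [DecidableEq κ] [Fintype κ]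

theorem restrict_eq {n : ℕ} (l : ℕ) (hl : l ≠ 0)
    (ρ : SpecialLinearGroup (Fin (n+3)) ℤ →* GL κ ℂ)
    (R : SpecialLinearGroup (Fin (n+3)) ℂ →* GL κ ℂ)
    {x : Fin (n+3) → Fin (n+3) → ℂ → Matrix κ κ ℂ} (hx : FlowSys x)
    (hRx : ∀ i j (hij : i ≠ j) t, (R (SpecialLinearGroup.transvection hij t) : Matrix κ κ ℂ) = x i j t)
    (hxρ : ∀ i j (hij : i ≠ j) (t : ℤ), x i j (l * t) =
        (ρ (SpecialLinearGroup.transvection hij (l * t)) : Matrix κ κ ℂ)) :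
    ∀ g ∈ Gam (Fin (n+3)) l, ρ g = R (SpecialLinearGroup.map (Int.castRingHom ℂ) g) := by
  have hlC : (l : ℂ) ≠ 0 := by exact_mod_cast hl
  let A : SpecialLinearGroup (Fin (n+3)) ℤ →* GL κ ℂ :=
    R.comp (SpecialLinearGroup.map (Int.castRingHom ℂ))
  have hAt : ∀ i j (hij : i ≠ j) (t : ℤ), A (SpecialLinearGroup.transvection hij t) =
      R (SpecialLinearGroup.transvection hij (t : ℂ)) := by
    intro i j hij t
    change R (SpecialLinearGroup.map (Int.castRingHom ℂ) _) = _
    rw [tv_map]; rfl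
  let K := MonoidHom.eqLocus ρ A
  have hK : ∀ i j (hij : i ≠ j) (t : ℤ), (l : ℤ) ∣ t → SpecialLinearGroup.transvection hij t ∈ K := by
    rintro i j hij _ ⟨t, rfl⟩
    change ρ _ = A _
    rw [hAt]
    apply Units.ext
    rw [hRx, ← hxρ i j hij]
    push_cast; rfl
  have hA : ∀ g, A g ∈ R.range := fun g => ⟨_, rfl⟩
  have hthird : ∀ i j : Fin (n+3), ∃ k, k ≠ i ∧ k ≠ j := by
    intro i j
    have : ∃ k ∉ ({i, j} : Finset (Fin (n+3))), True := by
      by_contra! h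
      have h2 : (Finset.univ : Finset (Fin (n+3))) ⊆ {i, j} := fun k _ => by
        by_contra hk; exact h k hk
      have := (Finset.card_le_card h2).trans Finset.card_le_two
      simp at this
    obtain ⟨k, hk, _⟩ := this
    simp at hk
    exact ⟨k, hk⟩
  have hS : ∀ g, g ∈ Scen A ρ R.range hA := by
    apply gen_top (n+1)
    intro k m hkm t
    set γ := SpecialLinearGroup.transvection hkm t with hγ
    -- conjugates stay in K
    have conjK : ∀ i j (hij : i ≠ j) (u : ℤ), (l : ℤ) ∣ u → (i ≠ m ∨ j ≠ k) →
        γ * SpecialLinearGroup.transvection hij u * γ⁻¹ ∈ K := by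
      intro i j hij u hu hor
      by_cases him : i = m
      · subst him
        have hjk : j ≠ k := by simpa using hor
        rw [hγ, tv_rel hkm hij hjk.symm, mul_inv_cancel_right]
        exact K.mul_mem (hK _ _ _ _ (hu.mul_left _)) (hK _ _ _ _ hu)
      · by_cases hjk : j = k
        · subst hjk
          have h1 := tv_rel hij hkm him u t
          have h2 : γ * SpecialLinearGroup.transvection hij u =
              (SpecialLinearGroup.transvection him (u * t))⁻¹ *
                SpecialLinearGroup.transvection hij u * γ := by
            rw [mul_assoc _ _ γ, hγ, h1]; group
          rw [h2, mul_inv_cancel_right]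
          exact K.mul_mem (K.inv_mem (hK _ _ _ _ (hu.mul_right _))) (hK _ _ _ _ hu)
        · rw [hγ, tv_comm hkm hij (Ne.symm hjk) (Ne.symm him), mul_inv_cancel_right]
          exact hK _ _ _ _ hu
    set c : GL κ ℂ := (A γ)⁻¹ * ρ γ with hc
    have c1 : ∀ i j (hij : i ≠ j) (u : ℤ), (l : ℤ) ∣ u → (i ≠ m ∨ j ≠ k) →
        c * A (SpecialLinearGroup.transvection hij u) =
          A (SpecialLinearGroup.transvection hij u) * c := by
      intro i j hij u hu hor
      have h1 : ρ _ = A _ := conjK i j hij u hu hor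
      have h2 : ρ _ = A _ := hK i j hij u hu
      rw [← h2]
      rw [map_mul, map_mul, map_inv, h2] at h1
      simp only [map_mul, map_inv] at h1
      rw [h2, hc]
      calc (A γ)⁻¹ * ρ γ * A (SpecialLinearGroup.transvection hij u)
          = (A γ)⁻¹ * (ρ γ * A (SpecialLinearGroup.transvection hij u) * (ρ γ)⁻¹) * ρ γ := by group
        _ = _ := by rw [h1]; group
    let Z : Subgroup (SpecialLinearGroup (Fin (n+3)) ℂ) :=
      (Subgroup.centralizer {c}).comap R
    have hZ : ∀ g, g ∈ Z ↔ c * R g = R g * c := by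
      intro g
      simp only [Z, Subgroup.mem_comap, Subgroup.mem_centralizer_singleton_iff]
      exact eq_comm
    have c2 : ∀ i j (hij : i ≠ j) (s : ℂ), (i ≠ m ∨ j ≠ k) →
        SpecialLinearGroup.transvection hij s ∈ Z := by
      intro i j hij s hor
      rw [hZ]
      apply Units.ext
      rw [Units.val_mul c, Units.val_mul _ c, hRx]
      refine IsPoly.eq ((IsPoly.const _).mul (hx.poly i j hij)) ((hx.poly i j hij).mul (IsPoly.const _))
        hlC (fun b => ?_) s
      have := congrArg Units.val (c1 i j hij (l * b) (dvd_mul_right _ _) hor)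
      rw [Units.val_mul c, Units.val_mul _ c, hAt, hRx] at this
      push_cast at this
      exact this
    have c3 : ∀ i j (hij : i ≠ j) (s : ℂ), SpecialLinearGroup.transvection hij s ∈ Z := by
      intro i j hij s
      by_cases hor : i ≠ m ∨ j ≠ k
      · exact c2 i j hij s hor
      · push Not at hor
        obtain ⟨p, hpi, hpj⟩ := hthird i j
        have h1 := tv_rel hpi.symm hpj hij s 1
        rw [mul_one, mul_assoc] at h1
        rw [eq_mul_inv_of_mul_eq h1.symm]
        have z1 := c2 i p hpi.symm s (Or.inr (by rw [← hor.2]; exact hpj))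
        have z2 := c2 p j hpj 1 (Or.inl (by rw [← hor.1]; exact hpi))
        exact Z.mul_mem (Z.mul_mem z1 z2) (Z.inv_mem (Z.mul_mem z2 z1))
    have c4 : ∀ g, g ∈ Z := tv_ind (fun g => g ∈ Z) c3 (fun _ _ => Z.mul_mem)
    rintro _ ⟨g, rfl⟩
    exact (hZ g).1 (c4 g)
  have hN : K.Normal := eqLocus_normal A ρ R.range hA hS
  intro g hg
  exact csp hl n K hN hK hg

lemma nilp_conj {u v w : GL κ ℂ} (h : w * u = v * w)
    (hu : IsNilpotent ((u : Matrix κ κ ℂ) - 1)) : IsNilpotent ((v : Matrix κ κ ℂ) - 1) := by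
  obtain ⟨k, hk⟩ := hu
  have hv : v = w * u * w⁻¹ := by rw [h, mul_inv_cancel_right]
  have e : (v : Matrix κ κ ℂ) - 1 = (w : Matrix κ κ ℂ) * ((u : Matrix κ κ ℂ) - 1) * (w⁻¹ : GL κ ℂ) := by
    rw [hv, mul_sub, sub_mul]
    simp
  refine ⟨k, ?_⟩
  rw [e]
  have : ∀ k : ℕ, ((w : Matrix κ κ ℂ) * ((u : Matrix κ κ ℂ) - 1) * (w⁻¹ : GL κ ℂ)) ^ k =
      (w : Matrix κ κ ℂ) * ((u : Matrix κ κ ℂ) - 1) ^ k * (w⁻¹ : GL κ ℂ) :=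
    fun k => Units.conj_pow w _ k
  rw [this, hk]
  simp

lemma all_nilp {n : ℕ} (ρ : SpecialLinearGroup (Fin (n+3)) ℤ →* GL κ ℂ) (t : ℤ)
    (h : IsNilpotent ((ρ (SpecialLinearGroup.transvection
      (zero_ne_one : (0 : Fin (n+3)) ≠ 1) t) : Matrix κ κ ℂ) - 1)) (i j : Fin (n+3)) (hij : i ≠ j) :
    IsNilpotent ((ρ (SpecialLinearGroup.transvection hij t) : Matrix κ κ ℂ) - 1) := by
  let P : Fin (n+3) → Fin (n+3) → Prop := fun i j => ∀ hij : i ≠ j,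
    IsNilpotent ((ρ (SpecialLinearGroup.transvection hij t) : Matrix κ κ ℂ) - 1)
  have row : ∀ i j k, i ≠ j → P i j → P k j := by
    intro i j k hij hP hkj
    by_cases hik : i = k
    · subst hik; exact hP hkj
    · have e := congrArg ρ (tv_conj_row hij hkj hik t)
      rw [map_mul ρ _ (SpecialLinearGroup.transvection hij t),
        map_mul ρ (SpecialLinearGroup.transvection hkj t)] at e
      exact nilp_conj e (hP hij)
  have col : ∀ i j k, i ≠ j → P i j → P i k := by
    intro i j k hij hP hik
    by_cases hjk : j = k
    · subst hjk; exact hP hik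
    · obtain ⟨w, hw⟩ := tv_conj_col hij hik hjk t
      have e := congrArg ρ hw
      rw [map_mul, map_mul] at e
      exact nilp_conj e (hP hij)
  have h01 : P 0 1 := fun _ => h
  have n01 : (0 : Fin (n+3)) ≠ 1 := zero_ne_one
  by_cases hj : j = 0
  · subst hj
    have n21 : (2 : Fin (n+3)) ≠ 1 := by
      intro h; have := congrArg Fin.val h
      simp [Fin.val_ofNat] at this
      rw [Nat.mod_eq_of_lt (by omega)] at this; omega
    have n20 : (2 : Fin (n+3)) ≠ 0 := by
      intro h; have := congrArg Fin.val h
      simp [Fin.val_ofNat] at this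
      rw [Nat.mod_eq_of_lt (by omega)] at this; omega
    exact row 2 0 i n20 (col 2 1 0 n21 (row 0 1 2 n01 h01)) hij
  · exact row 0 j i (Ne.symm hj) (col 0 1 j n01 h01) hij

lemma diag_conj {ι : Type*} [DecidableEq ι] [Fintype ι] {i j : ι} (hij : i ≠ j) (a t : ℂ)
    (ha : a ≠ 0) :
    diag2n hij a ha * SpecialLinearGroup.transvection hij t =
      SpecialLinearGroup.transvection hij (a ^ 2 * t) * diag2n hij a ha := by
  apply Subtype.ext
  ext p q
  simp [diag2n_coe, transvection_coe, mul_add, add_mul, Matrix.diagonal_apply]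
  simp [Matrix.single_apply, Matrix.mul_apply, Matrix.diagonal_apply, Matrix.one_apply]
  grind

lemma charpoly_cj {u v w : GL κ ℂ} (h : w * u = v * w) :
    (v : Matrix κ κ ℂ).charpoly = (u : Matrix κ κ ℂ).charpoly := by
  have hv : v = w * u * w⁻¹ := by rw [h, mul_inv_cancel_right]
  have := Matrix.charpoly_units_conj w (u : Matrix κ κ ℂ)
  rw [hv, ← this, Units.val_mul, Units.val_mul, Matrix.coe_units_inv]

theorem alg_nilp {ι : Type*} [DecidableEq ι] [Fintype ι]
    (R : SpecialLinearGroup ι ℂ →* GL κ ℂ)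
    (hR : ∀ a b : κ, ∃ P : MP ι, ∀ g : SpecialLinearGroup ι ℂ,
      (R g : Matrix κ κ ℂ) a b = ev g.1 P) {i j : ι} (hij : i ≠ j) (l : ℂ) :
    IsNilpotent ((R (SpecialLinearGroup.transvection hij l) : Matrix κ κ ℂ) - 1) := by
  have hp : ∀ a b : κ, ∃ Q : Polynomial ℂ, ∀ t : ℂ,
      (R (SpecialLinearGroup.transvection hij t) : Matrix κ κ ℂ) a b = Q.eval t := by
    intro a b
    obtain ⟨P, hP⟩ := hR a b
    obtain ⟨Q, hQ⟩ := ev_poly (isPoly_tv i j) P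
    exact ⟨Q, fun t => by rw [hP, ← hQ]; rfl⟩
  choose Q hQ using hp
  let M : Matrix κ κ (Polynomial ℂ) := Matrix.of Q
  have hM : ∀ t : ℂ, (R (SpecialLinearGroup.transvection hij t) : Matrix κ κ ℂ) =
      M.map (Polynomial.evalRingHom t) := by
    intro t; ext a b; rw [hQ]; simp [M]
  have hch : ∀ (m : ℕ) (t : ℂ), (M.charpoly.coeff m).eval t =
      ((R (SpecialLinearGroup.transvection hij t) : Matrix κ κ ℂ).charpoly).coeff m := by
    intro m t
    rw [hM, Matrix.charpoly_map, Polynomial.coeff_map]; rfl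
  have hconj : ∀ a : ℂ, a ≠ 0 →
      (R (SpecialLinearGroup.transvection hij (a ^ 2 * l)) : Matrix κ κ ℂ).charpoly =
      (R (SpecialLinearGroup.transvection hij l) : Matrix κ κ ℂ).charpoly := by
    intro a ha
    have e := congrArg R (diag_conj hij a l ha)
    rw [map_mul, map_mul] at e
    exact charpoly_cj e
  have h0 : (R (SpecialLinearGroup.transvection hij l) : Matrix κ κ ℂ).charpoly =
      (R (SpecialLinearGroup.transvection hij 0) : Matrix κ κ ℂ).charpoly := by
    ext m
    have hc : (M.charpoly.coeff m).comp (Polynomial.X ^ 2 * Polynomial.C l) = Polynomial.C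
        (((R (SpecialLinearGroup.transvection hij l) : Matrix κ κ ℂ).charpoly).coeff m) := by
      apply Polynomial.eq_of_infinite_eval_eq
      refine (Set.infinite_range_of_injective (f := fun k : ℕ => ((k + 1 : ℕ) : ℂ)) ?_).mono ?_
      · intro a b hab
        beta_reduce at hab
        have : a + 1 = b + 1 := by exact_mod_cast hab
        omega
      · rintro _ ⟨k, rfl⟩
        have := hconj ((k + 1 : ℕ) : ℂ) (by exact_mod_cast Nat.succ_ne_zero k)
        change Polynomial.eval _ _ = Polynomial.eval _ _
        rw [Polynomial.eval_comp, Polynomial.eval_mul, Polynomial.eval_pow, Polynomial.eval_X,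
          Polynomial.eval_C, hch, this, Polynomial.eval_C]
    have := congrArg (Polynomial.eval 0) hc
    rw [Polynomial.eval_comp, hch, Polynomial.eval_C] at this
    rw [← this]
    simp
  have h1 := Matrix.aeval_self_charpoly
    (R (SpecialLinearGroup.transvection hij l) : Matrix κ κ ℂ)
  rw [h0] at h1
  simp only [transvection_coeff_zero, map_one, Units.val_one, Matrix.charpoly_one] at h1
  refine ⟨Fintype.card κ, ?_⟩
  simpa using h1

end main
end DD

open Matrix
namespace DD
open Matrix.SpecialLinearGroup

lemma third {n : ℕ} (i j : Fin (n+3)) : ∃ k, k ≠ i ∧ k ≠ j := by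
  have : ∃ k ∉ ({i, j} : Finset (Fin (n+3))), True := by
    by_contra! h
    have h2 : (Finset.univ : Finset (Fin (n+3))) ⊆ {i, j} := fun k _ => by
      by_contra hk; exact h k hk
    have := (Finset.card_le_card h2).trans Finset.card_le_two
    simp at this
  obtain ⟨k, hk, _⟩ := this
  simp at hk
  exact ⟨k, hk⟩

lemma Emat_pow (n l : ℕ) : Emat n ℤ ^ l = SpecialLinearGroup.transvection
    (zero_ne_one : (0 : Fin (n+3)) ≠ 1) (l : ℤ) := by
  have : Emat n ℤ = SpecialLinearGroup.transvection
    (zero_ne_one : (0 : Fin (n+3)) ≠ 1) (1 : ℤ) := Subtype.ext rfl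
  rw [this, tv_pow, mul_one]

theorem main_fwd {n N l : ℕ} (ρ : SpecialLinearGroup (Fin (n + 3)) ℤ →* GL (Fin N) ℂ)
    (h : DepthDvd ρ l) :
    IsNilpotent ((ρ (Emat n ℤ ^ l) : Matrix (Fin N) (Fin N) ℂ) - 1) := by
  obtain ⟨R, halg, hres⟩ := h
  rw [Emat_pow, hres _ (tv_mem_Gam _ (dvd_refl _)), tv_map]
  exact alg_nilp R halg _ _

theorem main_bwd {n N l : ℕ} (hl : l ≠ 0)
    (ρ : SpecialLinearGroup (Fin (n + 3)) ℤ →* GL (Fin N) ℂ)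
    (h : IsNilpotent ((ρ (Emat n ℤ ^ l) : Matrix (Fin N) (Fin N) ℂ) - 1)) : DepthDvd ρ l := by
  rw [Emat_pow] at h
  obtain ⟨x, hx, hxρ⟩ := exists_flowSys ρ l hl (all_nilp ρ _ h)
  obtain ⟨θ, hθ⟩ := hx.exists_theta third
  obtain ⟨L, d, hR⟩ := exists_RS (0 : Fin (n+3))
  obtain ⟨R, hRx, hF⟩ := exists_rep hx hθ hR
  refine ⟨R.toHomUnits, fun a b => ?_, ?_⟩
  · obtain ⟨P, hP⟩ := rep_alg hx hR R hF a b
    exact ⟨P, hP⟩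
  · exact restrict_eq l hl ρ R.toHomUnits hx hRx hxρ

end DD

theorem depthDvd_iff_elementary_pow_unipotent (n N ℓ : ℕ) (hℓ : 1 ≤ ℓ)
    (ρ : Matrix.SpecialLinearGroup (Fin (n + 3)) ℤ →* GL (Fin N) ℂ) :
    DepthDvd ρ ℓ ↔
      IsNilpotent ((ρ (Emat n ℤ ^ ℓ) : Matrix (Fin N) (Fin N) ℂ) - 1) :=
  ⟨DD.main_fwd ρ, DD.main_bwd (by omega) ρ⟩
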